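/- arXiv:1406.4852 — 3 statements merged into one kernel-verified Lean document; each statement's English description precedes it below -/
import Mathlib

section
/- Every exact-repair regenerating code with parameters (n,k,d) = (n,6,7), n ≥ 8, and secondary parameters (B,α,β) satisfies 6B ≤ 16α + 60β (equivalently, 6B ≤ 2B_2 + 4B_3 − 4β, where B_2 = 2α + 14β and B_3 = 3α + 9β). -/
open Finset

/-- Shannon entropy (base 2) of a finitely-valued random variable `X` on a finite
probability space with mass function `P`. -/
noncomputable def entH {Ω S : Type*} [Fintype Ω] (P : Ω → ℝ) (X : Ω → S) : ℝ :=
  letI := Classical.decEq S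
  ∑ s ∈ Finset.univ.image X,
    -((∑ ω ∈ Finset.univ.filter (fun ω => X ω = s), P ω) *
       Real.logb 2 (∑ ω ∈ Finset.univ.filter (fun ω => X ω = s), P ω))

/-- Conditional entropy `H(X | Y) = H(X, Y) - H(Y)`. -/
noncomputable def condH {Ω S T : Type*} [Fintype Ω] (P : Ω → ℝ) (X : Ω → S) (Y : Ω → T) : ℝ :=
  entH P (fun ω => (X ω, Y ω)) - entH P Y

/-- The joint random variable `W_J = (W_j : j ∈ J)`. -/
def jointW {Ω : Type*} {n : ℕ} {σW : Fin n → Type*} (W : ∀ j, Ω → σW j)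
    (J : Finset (Fin n)) : Ω → ∀ j : J, σW j.1 :=
  fun ω j => W j.1 ω

/-- The joint random variable `(S_i^j : (i,j) ∈ E)` for a set `E` of pairs. -/
def jointS {Ω : Type*} {n : ℕ} {σS : Fin n → Fin n → Type*} (S : ∀ i j, Ω → σS i j)
    (E : Finset (Fin n × Fin n)) : Ω → ∀ e : E, σS e.1.1 e.1.2 :=
  fun ω e => S e.1.1 e.1.2 ω

/-- The joint random variable `S_I^j = (S_i^j : i ∈ I)`. -/
def jointSto {Ω : Type*} {n : ℕ} {σS : Fin n → Fin n → Type*} (S : ∀ i j, Ω → σS i j)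
    (I : Finset (Fin n)) (j : Fin n) : Ω → ∀ i : I, σS i.1 j :=
  fun ω i => S i.1 j ω

/-- An exact-repair regenerating code with parameters `(n,k,d)` (with `1 ≤ k ≤ d ≤ n-1`)
and secondary parameters `(B,α,β)`: the file `M`, the stored data `W j` on server `j`
(servers indexed by `Fin n`, server `j` of the paper being index `j-1`), and the helper
information `S i j` sent from server `i` to repair server `j`. -/
structure IsRegenCode {Ω : Type*} [Fintype Ω] (n k d : ℕ) (B α β : ℝ) (P : Ω → ℝ)
    {σM : Type*} {σW : Fin n → Type*} {σS : Fin n → Fin n → Type*}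
    (M : Ω → σM) (W : ∀ j, Ω → σW j) (S : ∀ i j, Ω → σS i j) : Prop where
  prob_nonneg : ∀ ω, 0 ≤ P ω
  prob_sum : ∑ ω, P ω = 1
  hk : 1 ≤ k
  hkd : k ≤ d
  hdn : d + 1 ≤ n
  hB : 0 ≤ B
  hα : 0 ≤ α
  hβ : 0 ≤ β
  hMB : entH P M = B
  hWα : ∀ j, entH P (W j) = α
  hWM : ∀ j, condH P (W j) M = 0
  hMW : ∀ J : Finset (Fin n), k ≤ J.card → condH P M (jointW W J) = 0
  hSβ : ∀ i j, i ≠ j → entH P (S i j) = β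
  hSW : ∀ i j, i ≠ j → condH P (S i j) (W i) = 0
  hWS : ∀ (j : Fin n) (I : Finset (Fin n)), d ≤ I.card → j ∉ I →
    condH P (W j) (jointSto S I j) = 0

/-- `B_q = qα + ((k-q)(k-q-1)/2)β + (d+1-k)(k-q)β`. -/
noncomputable def Bfun (k d q : ℕ) (α β : ℝ) : ℝ :=
  (q : ℝ) * α + (((k - q) * (k - q - 1) : ℕ) : ℝ) / 2 * β
    + (((d + 1 - k) * (k - q) : ℕ) : ℝ) * β

/-! ### Entropy of a partition of a finite probability space -/

/-- Probability of the class of `ω` under the equivalence relation `s`. -/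
noncomputable def classMass {Ω : Type*} [Fintype Ω] (P : Ω → ℝ) (s : Setoid Ω) (ω : Ω) : ℝ :=
  letI := Classical.propDecidable
  ∑ ω', if s ω ω' then P ω' else 0

/-- Shannon entropy (base 2) of the partition of `Ω` into the classes of `s`. -/
noncomputable def partitionEntropy {Ω : Type*} [Fintype Ω] (P : Ω → ℝ) (s : Setoid Ω) : ℝ :=
  -∑ ω, P ω * Real.logb 2 (classMass P s ω)

section PartitionEntropy

variable {Ω : Type*} [Fintype Ω] {P : Ω → ℝ}

lemma classMass_mono (hP : ∀ ω, 0 ≤ P ω) {s t : Setoid Ω} (hst : s ≤ t) (ω : Ω) :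
    classMass P s ω ≤ classMass P t ω := by
  classical
  unfold classMass
  refine Finset.sum_le_sum fun ω' _ => ?_
  by_cases h : s ω ω'
  · simp [h, hst h]
  · simp only [h, if_false]
    split_ifs
    exacts [hP _, le_rfl]

lemma le_classMass (hP : ∀ ω, 0 ≤ P ω) (s : Setoid Ω) (ω : Ω) : P ω ≤ classMass P s ω := by
  classical
  unfold classMass
  have h := Finset.single_le_sum (f := fun ω' => if s ω ω' then P ω' else 0)
    (fun i _ => by split_ifs; exacts [hP _, le_rfl]) (Finset.mem_univ ω)
  simpa [s.refl ω] using h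

lemma classMass_congr {s : Setoid Ω} {ω ω' : Ω} (h : s ω ω') :
    classMass P s ω = classMass P s ω' := by
  classical
  unfold classMass
  refine Finset.sum_congr rfl fun x _ => ?_
  have : s ω x ↔ s ω' x := ⟨fun hx => s.trans (s.symm h) hx, fun hx => s.trans h hx⟩
  simp [this]

lemma partitionEntropy_anti (hP : ∀ ω, 0 ≤ P ω) {s t : Setoid Ω} (hst : s ≤ t) :
    partitionEntropy P t ≤ partitionEntropy P s := by
  unfold partitionEntropy
  refine neg_le_neg (Finset.sum_le_sum fun ω _ => ?_)
  rcases (hP ω).eq_or_lt with h | h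
  · simp [← h]
  · exact mul_le_mul_of_nonneg_left
      (Real.logb_le_logb_of_le one_lt_two (h.trans_le (le_classMass hP s ω))
        (classMass_mono hP hst ω)) h.le

lemma partitionEntropy_top (hP1 : ∑ ω, P ω = 1) : partitionEntropy P ⊤ = 0 := by
  have h : ∀ ω, classMass P ⊤ ω = 1 := fun ω => by
    unfold classMass
    simp [← hP1, Setoid.top_def]
  simp [partitionEntropy, h]

lemma sum_div_classMass_le (hP : ∀ ω, 0 ≤ P ω) (s : Setoid Ω) (p : Ω → Prop) [DecidablePred p]
    (hp : ∀ ω ω', p ω → p ω' → s ω ω') :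
    ∑ ω, (if p ω then P ω / classMass P s ω else 0) ≤ 1 := by
  classical
  by_cases hne : ∃ ω₀, p ω₀
  · obtain ⟨ω₀, h₀⟩ := hne
    have hle : ∑ ω, (if p ω then P ω / classMass P s ω else 0)
        ≤ ∑ ω, (if s ω₀ ω then P ω else 0) / classMass P s ω₀ := by
      refine Finset.sum_le_sum fun ω _ => ?_
      by_cases h : p ω
      · simp [h, hp _ _ h₀ h, classMass_congr (hp _ _ h₀ h)]
      · simp only [h, if_false]
        exact div_nonneg (by split_ifs; exacts [hP _, le_rfl])
          ((hP _).trans (le_classMass hP s ω₀))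
    refine hle.trans ?_
    rw [← Finset.sum_div]
    unfold classMass
    exact div_self_le_one _
  · push Not at hne
    simp [hne]

lemma sum_mass_ratio_le (hP : ∀ ω, 0 ≤ P ω) (hP1 : ∑ ω, P ω = 1) {s t u : Setoid Ω}
    (hs : s ≤ u) (ht : t ≤ u) :
    ∑ ω, P ω * (classMass P s ω * classMass P t ω
      / (classMass P (s ⊓ t) ω * classMass P u ω)) ≤ 1 := by
  classical
  have hnn : ∀ (r : Setoid Ω) ω, 0 ≤ classMass P r ω :=
    fun r ω => (hP ω).trans (le_classMass hP r ω)
  have expand : ∀ ω, P ω * (classMass P s ω * classMass P t ω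
      / (classMass P (s ⊓ t) ω * classMass P u ω))
      = ∑ x, ∑ y, P x * (if u x y then P y / classMass P u x else 0) *
        (if s ω x ∧ t ω y then P ω / classMass P (s ⊓ t) ω else 0) := by
    intro ω
    have hst : classMass P s ω * classMass P t ω
        = ∑ x, ∑ y, (if s ω x then P x else 0) * (if t ω y then P y else 0) := by
      unfold classMass
      rw [Finset.sum_mul_sum]
    rw [hst, Finset.sum_div, Finset.mul_sum]
    refine Finset.sum_congr rfl fun x _ => ?_
    rw [Finset.sum_div, Finset.mul_sum]
    refine Finset.sum_congr rfl fun y _ => ?_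
    by_cases hx : s ω x
    · by_cases hy : t ω y
      · have hu : u x y := u.trans (u.symm (hs hx)) (ht hy)
        simp only [hx, hy, hu, if_true, and_self, classMass_congr (P := P) (hs hx)]
        simp only [div_eq_mul_inv, mul_inv]
        ring
      · simp [hy]
    · simp [hx]
  simp_rw [expand]
  rw [Finset.sum_comm]
  calc ∑ x, ∑ ω, ∑ y, P x * (if u x y then P y / classMass P u x else 0) *
        (if s ω x ∧ t ω y then P ω / classMass P (s ⊓ t) ω else 0)
      = ∑ x, ∑ y, P x * (if u x y then P y / classMass P u x else 0) *
        ∑ ω, (if s ω x ∧ t ω y then P ω / classMass P (s ⊓ t) ω else 0) := by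
        refine Finset.sum_congr rfl fun x _ => ?_
        rw [Finset.sum_comm]
        simp_rw [Finset.mul_sum]
    _ ≤ ∑ x, ∑ y, P x * (if u x y then P y / classMass P u x else 0) := by
        refine Finset.sum_le_sum fun x _ => Finset.sum_le_sum fun y _ => ?_
        refine mul_le_of_le_one_right (mul_nonneg (hP x) ?_)
          (sum_div_classMass_le hP (s ⊓ t) _ ?_)
        · split_ifs
          exacts [div_nonneg (hP y) (hnn u x), le_rfl]
        · rintro ω ω' ⟨h1, h2⟩ ⟨h3, h4⟩
          exact ⟨s.trans h1 (s.symm h3), t.trans h2 (t.symm h4)⟩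
    _ ≤ ∑ x, P x := by
        refine Finset.sum_le_sum fun x _ => ?_
        rw [← Finset.mul_sum]
        refine mul_le_of_le_one_right (hP x) ?_
        have : ∑ y, (if u x y then P y / classMass P u x else 0)
            = (∑ y, if u x y then P y else 0) / classMass P u x := by
          rw [Finset.sum_div]
          exact Finset.sum_congr rfl fun y _ => by split_ifs <;> simp
        rw [this]
        unfold classMass
        exact div_self_le_one _
    _ = 1 := hP1

lemma partitionEntropy_inf_add_le (hP : ∀ ω, 0 ≤ P ω) (hP1 : ∑ ω, P ω = 1) {s t u : Setoid Ω}
    (hs : s ≤ u) (ht : t ≤ u) :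
    partitionEntropy P (s ⊓ t) + partitionEntropy P u
      ≤ partitionEntropy P s + partitionEntropy P t := by
  have hlog2 : 0 < Real.log 2 := Real.log_pos one_lt_two
  have key : ∀ ω, P ω * (Real.logb 2 (classMass P s ω) + Real.logb 2 (classMass P t ω)
        - Real.logb 2 (classMass P (s ⊓ t) ω) - Real.logb 2 (classMass P u ω))
      ≤ (P ω * (classMass P s ω * classMass P t ω
        / (classMass P (s ⊓ t) ω * classMass P u ω)) - P ω) / Real.log 2 := by
    intro ω
    rcases (hP ω).eq_or_lt with h | h
    · simp [← h]
    · have pos : ∀ r : Setoid Ω, 0 < classMass P r ω :=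
        fun r => h.trans_le (le_classMass hP r ω)
      have h1 := pos s
      have h2 := pos t
      have h3 := pos (s ⊓ t)
      have h4 := pos u
      have hl := Real.log_le_sub_one_of_pos
        (show 0 < classMass P s ω * classMass P t ω
          / (classMass P (s ⊓ t) ω * classMass P u ω) by positivity)
      rw [Real.log_div (by positivity) (by positivity), Real.log_mul h1.ne' h2.ne',
        Real.log_mul h3.ne' h4.ne'] at hl
      rw [le_div_iff₀ hlog2]
      simp only [Real.logb]
      have := mul_le_mul_of_nonneg_left hl h.le
      rw [← add_div, ← sub_div, ← sub_div, mul_assoc, div_mul_cancel₀ _ hlog2.ne']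
      linarith
  have hsum := Finset.sum_le_sum fun ω (_ : ω ∈ Finset.univ) => key ω
  rw [← Finset.sum_div, Finset.sum_sub_distrib, hP1] at hsum
  have hr : (∑ ω, P ω * (classMass P s ω * classMass P t ω
      / (classMass P (s ⊓ t) ω * classMass P u ω)) - 1) / Real.log 2 ≤ 0 :=
    div_nonpos_of_nonpos_of_nonneg (by linarith [sum_mass_ratio_le hP hP1 hs ht]) hlog2.le
  have := hsum.trans hr
  simp only [mul_sub, mul_add, Finset.sum_sub_distrib, Finset.sum_add_distrib] at this
  unfold partitionEntropy
  linarith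

lemma entH_eq_partitionEntropy {T : Type*} (X : Ω → T) :
    entH P X = partitionEntropy P (Setoid.ker X) := by
  classical
  unfold entH partitionEntropy
  have hm : ∀ ω, classMass P (Setoid.ker X) ω
      = ∑ ω' ∈ Finset.univ.filter (fun ω' => X ω' = X ω), P ω' := by
    intro ω
    unfold classMass
    rw [Finset.sum_filter]
    exact Finset.sum_congr rfl fun x _ => by simp [Setoid.ker_def, eq_comm]
  simp_rw [hm]
  rw [← Finset.sum_fiberwise_of_maps_to
    (fun ω (_ : ω ∈ Finset.univ) => Finset.mem_image_of_mem X (Finset.mem_univ ω)),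
    ← Finset.sum_neg_distrib]
  refine Finset.sum_congr (by congr) fun a _ => ?_
  rw [Finset.sum_mul]
  congr 1
  refine Finset.sum_congr (by congr) fun ω hω => ?_
  simp only [Finset.mem_filter, Finset.mem_univ, true_and] at hω
  subst hω
  congr!

lemma condH_eq_zero_iff {T U : Type*} (X : Ω → T) (Y : Ω → U) :
    condH P X Y = 0 ↔
      partitionEntropy P (Setoid.ker X ⊓ Setoid.ker Y) = partitionEntropy P (Setoid.ker Y) := by
  have hk : Setoid.ker (fun ω => (X ω, Y ω)) = Setoid.ker X ⊓ Setoid.ker Y := by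
    ext a b
    simp [Setoid.ker_def, Setoid.inf_def]
  rw [condH, entH_eq_partitionEntropy, entH_eq_partitionEntropy, hk, sub_eq_zero]

end PartitionEntropy

/-! ### Rank functions of regenerating codes -/

/-- Labels of the variables of a code with set of servers `ι`: `Sum.inl i` for the data stored
on server `i`, and `Sum.inr (i, j)` for the help from server `i` to server `j`. -/
abbrev CodeVar (ι : Type*) := ι ⊕ ι × ι

/-- The properties of the joint entropy function of an exact-repair regenerating code with
`k = 6` and `d = 7` that are used for the outer bound. -/
structure IsRepairRank {ι : Type*} [DecidableEq ι] (B α β : ℝ)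
    (h : Finset (CodeVar ι) → ℝ) : Prop where
  empty : h ∅ = 0
  mono : ∀ {A A'}, A ⊆ A' → h A ≤ h A'
  submod : ∀ {C A A'}, C ⊆ A → C ⊆ A' → h (A ∪ A') + h C ≤ h A + h A'
  storage : ∀ i, h {.inl i} = α
  bandwidth : ∀ i j, i ≠ j → h {.inr (i, j)} = β
  helper : ∀ i j, i ≠ j → h (insert (.inr (i, j)) {.inl i}) ≤ h {.inl i}
  repair : ∀ (j : ι) (I : Finset ι), 7 ≤ I.card → j ∉ I →
    h (insert (.inl j) (I.image fun i => .inr (i, j))) ≤ h (I.image fun i => .inr (i, j))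
  file : ∀ J : Finset ι, 6 ≤ J.card → B ≤ h (J.image .inl)

/-- The variable `v` is determined by the variables in `A`. -/
@[irreducible] def Determines {V : Type*} [DecidableEq V] (h : Finset V → ℝ)
    (A : Finset V) (v : V) : Prop :=
  h (insert v A) ≤ h A

namespace IsRepairRank

variable {ι : Type*} [DecidableEq ι] {B α β : ℝ} {h : Finset (CodeVar ι) → ℝ}

lemma determines_of_mem {A : Finset (CodeVar ι)} {v : CodeVar ι} (hv : v ∈ A) :
    Determines h A v := by
  simp [Determines, hv]

variable (H : IsRepairRank B α β h)
include H

lemma insert_le {C A : Finset (CodeVar ι)} (hCA : C ⊆ A) (v : CodeVar ι) :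
    h (insert v A) ≤ h A + (h (insert v C) - h C) := by
  have := H.submod (Finset.subset_insert v C) hCA
  have h2 := H.mono (show insert v A ⊆ insert v C ∪ A from
    Finset.insert_subset (by simp) Finset.subset_union_right)
  linarith

lemma determines_mono {A A' : Finset (CodeVar ι)} (hA : A ⊆ A') {v : CodeVar ι}
    (hv : Determines h A v) : Determines h A' v := by
  have := H.insert_le hA v
  rw [Determines] at hv ⊢
  linarith

lemma union_le {A T : Finset (CodeVar ι)} (hT : ∀ v ∈ T, Determines h A v) :
    h (A ∪ T) ≤ h A := by
  induction T using Finset.induction_on with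
  | empty => simp
  | insert v T _ ih =>
    have h1 := ih fun w hw => hT w (Finset.mem_insert_of_mem hw)
    have h2 := H.determines_mono (Finset.subset_union_left (s₂ := T))
      (hT v (Finset.mem_insert_self v T))
    rw [Finset.union_insert]
    rw [Determines] at h2
    exact h2.trans h1

lemma determines_trans {A T : Finset (CodeVar ι)} {v : CodeVar ι}
    (hT : ∀ w ∈ T, Determines h A w) (hv : Determines h T v) : Determines h A v := by
  have h1 := H.union_le hT
  have h2 := H.determines_mono (Finset.subset_union_right (s₁ := A)) hv
  have h3 := H.mono (Finset.insert_subset_insert v (Finset.subset_union_left (s₁ := A) (s₂ := T)))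
  rw [Determines] at h2 ⊢
  exact h3.trans (h2.trans h1)

lemma determines_helper {A : Finset (CodeVar ι)} {i j : ι} (hij : i ≠ j)
    (hi : Determines h A (.inl i)) : Determines h A (.inr (i, j)) := by
  have hd : Determines h {.inl i} (.inr (i, j)) := by
    rw [Determines]
    exact H.helper i j hij
  exact H.determines_trans (by simpa using hi) hd

lemma determines_repair {e : Fin 8 → ι} (he : e.Injective) {A : Finset (CodeVar ι)} (j : Fin 8)
    (hj : ∀ i, i ≠ j → Determines h A (.inl (e i)) ∨ .inr (e i, e j) ∈ A) :
    Determines h A (.inl (e j)) := by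
  refine H.determines_trans (T := ((Finset.univ.erase j).image e).image fun i => .inr (i, e j))
    ?_ ?_
  · intro w hw
    simp only [Finset.mem_image, Finset.mem_erase, Finset.mem_univ, and_true] at hw
    obtain ⟨_, ⟨i, hi, rfl⟩, rfl⟩ := hw
    rcases hj i hi with hd | hd
    · exact H.determines_helper (he.ne hi) hd
    · exact determines_of_mem hd
  · rw [Determines]
    refine H.repair (e j) ((Finset.univ.erase j).image e) ?_ ?_
    · rw [Finset.card_image_of_injective _ he]
      simp
    · simp [he.eq_iff]

lemma file_le {e : Fin 8 → ι} (he : e.Injective) {A : Finset (CodeVar ι)} (J : Finset (Fin 8))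
    (hJ : 6 ≤ J.card) (hA : ∀ i ∈ J, Determines h A (.inl (e i))) : B ≤ h A := by
  refine (H.file (J.image e) (by rwa [Finset.card_image_of_injective _ he])).trans ?_
  refine (H.mono Finset.subset_union_right).trans (H.union_le (A := A) ?_)
  simpa using hA

lemma insert_helper_le (A : Finset (CodeVar ι)) {i j : ι} (hij : i ≠ j) :
    h (insert (.inr (i, j)) A) ≤ h A + β := by
  have := H.insert_le (Finset.empty_subset A) (.inr (i, j))
  have h2 := H.bandwidth i j hij
  rw [insert_empty_eq, H.empty, h2] at this
  linarith

lemma insert_storage_le {A C : Finset (CodeVar ι)} (hCA : C ⊆ A) (i : ι)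
    (hC : ∀ v ∈ C, ∃ j, i ≠ j ∧ v = .inr (i, j)) :
    h (insert (.inl i) A) ≤ h A + α - h C := by
  have h1 := H.insert_le hCA (.inl i)
  have h2 : h ({.inl i} ∪ C) ≤ h {.inl i} := H.union_le fun v hv => by
    obtain ⟨j, hij, rfl⟩ := hC v hv
    exact H.determines_helper hij (determines_of_mem (by simp))
  rw [H.storage, Finset.singleton_union] at h2
  linarith

lemma insert_column_le {e : Fin 8 → ι} (he : e.Injective) (A : Finset (CodeVar ι)) (j : Fin 8)
    (M : Finset (Fin 8)) (hjM : j ∉ M) {m : ℕ} (hm : M.card = m)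
    (hA : ∀ i, i ≠ j → i ∈ M ∨ .inl (e i) ∈ A ∨ .inr (e i, e j) ∈ A) :
    h (insert (.inl (e j)) (A ∪ M.image fun i => .inr (e i, e j))) ≤ h A + m * β := by
  have hcol : h (A ∪ M.image fun i => .inr (e i, e j)) ≤ h A + M.card * β := by
    clear hA hm
    induction M using Finset.induction_on with
    | empty => simp
    | insert i M hi ih =>
      rw [Finset.mem_insert, not_or] at hjM
      rw [Finset.image_insert, Finset.union_insert, Finset.card_insert_of_notMem hi]
      have := H.insert_helper_le (A ∪ M.image fun i => .inr (e i, e j)) (he.ne (Ne.symm hjM.1))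
      push_cast
      linarith [ih hjM.2]
  rw [hm] at hcol
  refine le_trans ?_ hcol
  have hd : Determines h (A ∪ M.image fun i => .inr (e i, e j)) (.inl (e j)) := by
    refine H.determines_repair he j fun i hi => ?_
    rcases hA i hi with hM | hW | hS
    · exact Or.inr (Finset.mem_union_right _ (Finset.mem_image_of_mem _ hM))
    · exact Or.inl (determines_of_mem (Finset.mem_union_left _ hW))
    · exact Or.inr (Finset.mem_union_left _ hS)
  rwa [Determines] at hd

lemma pair_storage_le (i j : ι) : h {.inl i, .inl j} ≤ 2 * α := by
  have := H.insert_storage_le (A := {.inl j}) (Finset.empty_subset _) i (by simp)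
  rw [H.storage, H.empty] at this
  linarith

lemma file_le_four_storage {e : Fin 8 → ι} (he : e.Injective) :
    B ≤ h {.inl (e 0), .inl (e 1), .inl (e 2), .inl (e 3)} + 5 * β := by
  obtain ⟨A₀, hA₀⟩ : ∃ A : Finset (CodeVar ι),
    A = {.inl (e 0), .inl (e 1), .inl (e 2), .inl (e 3)} := ⟨_, rfl⟩
  have b₁ := H.insert_column_le (m := 3) he A₀ 4 {5, 6, 7} (by decide) rfl (by
    simp [Fin.forall_fin_succ, hA₀])
  obtain ⟨A₁, hA₁⟩ : ∃ A : Finset (CodeVar ι), A = insert (.inl (e 4))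
    (A₀ ∪ ({5, 6, 7} : Finset (Fin 8)).image fun i => .inr (e i, e 4)) := ⟨_, rfl⟩
  rw [← hA₁] at b₁
  have b₂ := H.insert_column_le (m := 2) he A₁ 5 {6, 7} (by decide) rfl (by
    simp [Fin.forall_fin_succ, hA₁, hA₀])
  have b₃ := H.file_le he {0, 1, 2, 3, 4, 5} (by decide)
    (A := insert (.inl (e 5)) (A₁ ∪ ({6, 7} : Finset (Fin 8)).image fun i => .inr (e i, e 5)))
    (fun i hi => determines_of_mem (by revert i; simp [hA₁, hA₀]))
  rw [← hA₀]
  push_cast at b₁ b₂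
  linarith

lemma file_add_three_storage_le {e : Fin 8 → ι} (he : e.Injective) :
    B + h {.inl (e 0), .inl (e 1), .inl (e 2)}
      ≤ 5 * α + 13 * β - h {.inr (e 4, e 1), .inr (e 4, e 2)}
        + h {.inr (e 5, e 2), .inr (e 5, e 3)} := by
  have a₁ := H.pair_storage_le (e 0) (e 2)
  have a₂ := H.pair_storage_le (e 0) (e 1)
  have c₁ := H.insert_column_le (m := 5) he {.inl (e 0), .inl (e 2)} 1 {3, 4, 5, 6, 7}
    (by decide) rfl (by simp [Fin.forall_fin_succ])
  have c₂ := H.insert_column_le (m := 5) he {.inl (e 0), .inl (e 1)} 2 {3, 4, 5, 6, 7}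
    (by decide) rfl (by simp [Fin.forall_fin_succ])
  obtain ⟨X₁, hX₁⟩ : ∃ A : Finset (CodeVar ι),
    A = insert (.inl (e 1)) ({.inl (e 0), .inl (e 2)} ∪
    ({3, 4, 5, 6, 7} : Finset (Fin 8)).image fun i => .inr (e i, e 1)) := ⟨_, rfl⟩
  obtain ⟨X₂, hX₂⟩ : ∃ A : Finset (CodeVar ι),
    A = insert (.inl (e 2)) ({.inl (e 0), .inl (e 1)} ∪
    ({3, 4, 5, 6, 7} : Finset (Fin 8)).image fun i => .inr (e i, e 2)) := ⟨_, rfl⟩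
  rw [← hX₁] at c₁
  rw [← hX₂] at c₂
  have s := H.submod (C := {.inl (e 0), .inl (e 1), .inl (e 2)}) (A := X₁) (A' := X₂)
    (by simp [Finset.insert_subset_iff, hX₁]) (by simp [Finset.insert_subset_iff, hX₂])
  obtain ⟨A₀, hA₀⟩ : ∃ A : Finset (CodeVar ι), A = X₁ ∪ X₂ := ⟨_, rfl⟩
  have b₁ := H.insert_storage_le (A := A₀) (C := {.inr (e 4, e 1), .inr (e 4, e 2)})
    (by simp [Finset.insert_subset_iff, hA₀, hX₁, hX₂]) (e 4) (by simp [he.eq_iff])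
  obtain ⟨A₁, hA₁⟩ : ∃ A : Finset (CodeVar ι), A = insert (.inl (e 4)) A₀ := ⟨_, rfl⟩
  have b₂ := H.insert_le (A := A₁) (C := {.inr (e 5, e 2)})
    (by simp [hA₁, hA₀, hX₂]) (.inr (e 5, e 3))
  rw [H.bandwidth _ _ (he.ne (by decide)), Finset.pair_comm] at b₂
  obtain ⟨A₂, hA₂⟩ : ∃ A : Finset (CodeVar ι), A = insert (.inr (e 5, e 3)) A₁ := ⟨_, rfl⟩
  have b₃ := H.insert_column_le (m := 2) he A₂ 3 {6, 7} (by decide) rfl (by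
    simp [Fin.forall_fin_succ, hA₂, hA₁, hA₀, hX₁])
  obtain ⟨A₃, hA₃⟩ : ∃ A : Finset (CodeVar ι), A = insert (.inl (e 3))
    (A₂ ∪ ({6, 7} : Finset (Fin 8)).image fun i => .inr (e i, e 3)) := ⟨_, rfl⟩
  have b₄ := H.insert_column_le (m := 2) he A₃ 7 {5, 6} (by decide) rfl (by
    simp [Fin.forall_fin_succ, hA₃, hA₂, hA₁, hA₀, hX₁])
  have b₅ := H.file_le he {0, 1, 2, 3, 4, 7} (by decide)
    (A := insert (.inl (e 7)) (A₃ ∪ ({5, 6} : Finset (Fin 8)).image fun i => .inr (e i, e 7)))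
    (fun i hi => determines_of_mem (by
      revert i; simp [hA₃, hA₂, hA₁, hA₀, hX₁]))
  rw [← hA₀] at s
  rw [← hA₁] at b₁
  rw [← hA₂] at b₂
  rw [← hA₃] at b₃
  push_cast at c₁ c₂ b₃ b₄
  linarith

lemma file_add_four_storage_le {e : Fin 8 → ι} (he : e.Injective) :
    B + 2 * h {.inl (e 0), .inl (e 1), .inl (e 2), .inl (e 3)}
      ≤ h {.inl (e 0), .inl (e 1), .inl (e 2)} + h {.inl (e 0), .inl (e 2), .inl (e 3)}
        + h {.inl (e 0), .inl (e 3), .inl (e 1)} + 12 * β + α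
        - h {.inr (e 4, e 1), .inr (e 4, e 2), .inr (e 4, e 3)}
        + (h {.inr (e 6, e 5), .inr (e 6, e 1), .inr (e 6, e 2), .inr (e 6, e 3)}
          - h {.inr (e 6, e 1), .inr (e 6, e 2), .inr (e 6, e 3)})
        + (h {.inr (e 7, e 5), .inr (e 7, e 1), .inr (e 7, e 2), .inr (e 7, e 3)}
          - h {.inr (e 7, e 1), .inr (e 7, e 2), .inr (e 7, e 3)}) := by
  have c₁ := H.insert_column_le (m := 4) he {.inl (e 0), .inl (e 2), .inl (e 3)} 1 {4, 5, 6, 7}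
    (by decide) rfl (by simp [Fin.forall_fin_succ])
  have c₂ := H.insert_column_le (m := 4) he {.inl (e 0), .inl (e 3), .inl (e 1)} 2 {4, 5, 6, 7}
    (by decide) rfl (by simp [Fin.forall_fin_succ])
  have c₃ := H.insert_column_le (m := 4) he {.inl (e 0), .inl (e 1), .inl (e 2)} 3 {4, 5, 6, 7}
    (by decide) rfl (by simp [Fin.forall_fin_succ])
  obtain ⟨X₁, hX₁⟩ : ∃ A : Finset (CodeVar ι),
    A = insert (.inl (e 1)) ({.inl (e 0), .inl (e 2), .inl (e 3)} ∪
    ({4, 5, 6, 7} : Finset (Fin 8)).image fun i => .inr (e i, e 1)) := ⟨_, rfl⟩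
  obtain ⟨X₂, hX₂⟩ : ∃ A : Finset (CodeVar ι),
    A = insert (.inl (e 2)) ({.inl (e 0), .inl (e 3), .inl (e 1)} ∪
    ({4, 5, 6, 7} : Finset (Fin 8)).image fun i => .inr (e i, e 2)) := ⟨_, rfl⟩
  obtain ⟨X₃, hX₃⟩ : ∃ A : Finset (CodeVar ι),
    A = insert (.inl (e 3)) ({.inl (e 0), .inl (e 1), .inl (e 2)} ∪
    ({4, 5, 6, 7} : Finset (Fin 8)).image fun i => .inr (e i, e 3)) := ⟨_, rfl⟩
  rw [← hX₁] at c₁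
  rw [← hX₂] at c₂
  rw [← hX₃] at c₃
  have s₁ := H.submod (C := {.inl (e 0), .inl (e 1), .inl (e 2), .inl (e 3)}) (A := X₁) (A' := X₂)
    (by simp [Finset.insert_subset_iff, hX₁]) (by simp [Finset.insert_subset_iff, hX₂])
  have s₂ := H.submod (C := {.inl (e 0), .inl (e 1), .inl (e 2), .inl (e 3)})
    (A := X₁ ∪ X₂) (A' := X₃)
    (by simp [Finset.insert_subset_iff, hX₁]) (by simp [Finset.insert_subset_iff, hX₃])
  obtain ⟨A₀, hA₀⟩ : ∃ A : Finset (CodeVar ι), A = X₁ ∪ X₂ ∪ X₃ := ⟨_, rfl⟩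
  have b₁ := H.insert_storage_le (A := A₀)
    (C := {.inr (e 4, e 1), .inr (e 4, e 2), .inr (e 4, e 3)})
    (by simp [Finset.insert_subset_iff, hA₀, hX₁, hX₂, hX₃]) (e 4) (by simp [he.eq_iff])
  obtain ⟨A₁, hA₁⟩ : ∃ A : Finset (CodeVar ι), A = insert (.inl (e 4)) A₀ := ⟨_, rfl⟩
  have b₂ := H.insert_le (A := A₁) (C := {.inr (e 6, e 1), .inr (e 6, e 2), .inr (e 6, e 3)})
    (by simp [Finset.insert_subset_iff, hA₁, hA₀, hX₁, hX₂, hX₃]) (.inr (e 6, e 5))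
  obtain ⟨A₂, hA₂⟩ : ∃ A : Finset (CodeVar ι), A = insert (.inr (e 6, e 5)) A₁ := ⟨_, rfl⟩
  have b₃ := H.insert_le (A := A₂) (C := {.inr (e 7, e 1), .inr (e 7, e 2), .inr (e 7, e 3)})
    (by simp [Finset.insert_subset_iff, hA₂, hA₁, hA₀, hX₁, hX₂, hX₃]) (.inr (e 7, e 5))
  obtain ⟨A₃, hA₃⟩ : ∃ A : Finset (CodeVar ι), A = insert (.inr (e 7, e 5)) A₂ := ⟨_, rfl⟩
  have b₄ := H.insert_column_le (m := 0) he A₃ 5 ∅ (by decide) rfl (by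
    simp [Fin.forall_fin_succ, hA₃, hA₂, hA₁, hA₀, hX₁])
  have b₅ := H.file_le he {0, 1, 2, 3, 4, 5} (by decide)
    (A := insert (.inl (e 5)) (A₃ ∪ (∅ : Finset (Fin 8)).image fun i => .inr (e i, e 5)))
    (fun i hi => determines_of_mem (by
      revert i; simp [hA₃, hA₂, hA₁, hA₀, hX₁]))
  rw [← hA₀] at s₂
  rw [← hA₁] at b₁
  rw [← hA₂] at b₂
  rw [← hA₃] at b₃
  push_cast at c₁ c₂ c₃ b₄
  linarith

/-- The outer bound up to an error term in the entropies of help from single servers. -/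
lemma six_mul_file_le_add {e : Fin 8 → ι} (he : e.Injective) :
    6 * B ≤ 16 * α + 61 * β
      - h {.inr (e 4, e 1), .inr (e 4, e 2), .inr (e 4, e 3)}
      + (h {.inr (e 6, e 5), .inr (e 6, e 1), .inr (e 6, e 2), .inr (e 6, e 3)}
        - h {.inr (e 6, e 1), .inr (e 6, e 2), .inr (e 6, e 3)})
      + (h {.inr (e 7, e 5), .inr (e 7, e 1), .inr (e 7, e 2), .inr (e 7, e 3)}
        - h {.inr (e 7, e 1), .inr (e 7, e 2), .inr (e 7, e 3)}) := by
  have h₁ := H.file_le_four_storage he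
  have h₂ := H.file_add_four_storage_le he
  have c₁ := H.file_add_three_storage_le he
  have c₂ := H.file_add_three_storage_le
    (he.comp (show Function.Injective ![0, 2, 3, 1, 5, 6, 4, (7 : Fin 8)] by decide))
  have c₃ := H.file_add_three_storage_le
    (he.comp (show Function.Injective ![0, 3, 1, 2, 6, 4, 5, (7 : Fin 8)] by decide))
  simp only [Function.comp_apply, Matrix.cons_val] at c₂ c₃
  linarith

lemma helper_increments_le {i a b c d : ι} (hd : i ≠ d) :
    (h {.inr (i, b), .inr (i, a), .inr (i, c), .inr (i, d)}
        - h {.inr (i, a), .inr (i, c), .inr (i, d)})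
      + (h {.inr (i, c), .inr (i, a), .inr (i, b), .inr (i, d)}
        - h {.inr (i, a), .inr (i, b), .inr (i, d)}) + β
      ≤ h {.inr (i, b), .inr (i, c), .inr (i, d)} := by
  have h₁ := H.insert_le (C := {.inr (i, c), .inr (i, d)})
    (A := {.inr (i, a), .inr (i, c), .inr (i, d)}) (Finset.subset_insert _ _) (.inr (i, b))
  have h₂ := H.insert_le (C := {.inr (i, d)})
    (A := {.inr (i, a), .inr (i, b), .inr (i, d)}) (by simp) (.inr (i, c))
  rw [H.bandwidth i d hd] at h₂
  linarith

theorem six_mul_file_le {e : Fin 8 → ι} (he : e.Injective) : 6 * B ≤ 16 * α + 60 * β := by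
  have h₁ := H.six_mul_file_le_add
    (he.comp (show Function.Injective ![0, 2, 3, 4, 5, 1, 6, (7 : Fin 8)] by decide))
  have h₂ := H.six_mul_file_le_add
    (he.comp (show Function.Injective ![0, 1, 3, 4, 6, 2, 5, (7 : Fin 8)] by decide))
  have h₃ := H.six_mul_file_le_add
    (he.comp (show Function.Injective ![0, 1, 2, 4, 7, 3, 5, (6 : Fin 8)] by decide))
  simp only [Function.comp_apply, Matrix.cons_val] at h₁ h₂ h₃
  have g₅ := H.helper_increments_le (a := e 1) (b := e 2) (c := e 3)
    (he.ne (show (5 : Fin 8) ≠ 4 by decide))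
  have g₆ := H.helper_increments_le (a := e 2) (b := e 1) (c := e 3)
    (he.ne (show (6 : Fin 8) ≠ 4 by decide))
  have g₇ := H.helper_increments_le (a := e 3) (b := e 1) (c := e 2)
    (he.ne (show (7 : Fin 8) ≠ 4 by decide))
  rw [Finset.insert_comm (.inr (e 6, e 2) : CodeVar ι) (.inr (e 6, e 1))
      {.inr (e 6, e 4)}] at g₆
  rw [Finset.insert_comm (.inr (e 7, e 3) : CodeVar ι) (.inr (e 7, e 1))
      {.inr (e 7, e 4)},
    Finset.insert_comm (.inr (e 7, e 3) : CodeVar ι) (.inr (e 7, e 2))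
      {.inr (e 7, e 4)}] at g₇
  linarith

end IsRepairRank

lemma ker_restrict_eq_inf {Ω κ : Type*} {σ : κ → Type*} (X : ∀ i, Ω → σ i) (I : Finset κ) :
    Setoid.ker (fun ω (i : I) => X i ω) = I.inf fun i => Setoid.ker (X i) := by
  refine le_antisymm (Finset.le_inf fun i hi a b hab => congrFun hab ⟨i, hi⟩) fun a b hab => ?_
  exact funext fun i => Finset.inf_le (f := fun i => Setoid.ker (X i)) i.2 hab

lemma IsRegenCode.isRepairRank {Ω : Type*} [Fintype Ω] {n : ℕ} {B α β : ℝ} {P : Ω → ℝ}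
    {σM : Type*} {σW : Fin n → Type*} {σS : Fin n → Fin n → Type*}
    {M : Ω → σM} {W : ∀ j, Ω → σW j} {S : ∀ i j, Ω → σS i j}
    (hcode : IsRegenCode n 6 7 B α β P M W S) :
    IsRepairRank B α β fun A : Finset (CodeVar (Fin n)) => partitionEntropy P
      (A.inf (Sum.elim (fun i => Setoid.ker (W i)) fun p => Setoid.ker (S p.1 p.2))) where
  empty := by simpa using partitionEntropy_top hcode.prob_sum
  mono hA := partitionEntropy_anti hcode.prob_nonneg (Finset.inf_mono hA)
  submod hA hA' := by
    rw [Finset.inf_union]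
    exact partitionEntropy_inf_add_le hcode.prob_nonneg hcode.prob_sum
      (Finset.inf_mono hA) (Finset.inf_mono hA')
  storage i := by
    simpa [entH_eq_partitionEntropy] using hcode.hWα i
  bandwidth i j hij := by
    simpa [entH_eq_partitionEntropy] using hcode.hSβ i j hij
  helper i j hij := by
    simpa using ((condH_eq_zero_iff _ _).1 (hcode.hSW i j hij)).le
  repair j I hI hj := by
    have hk : Setoid.ker (jointSto S I j) = I.inf fun i => Setoid.ker (S i j) :=
      ker_restrict_eq_inf (fun i => S i j) I
    have := (condH_eq_zero_iff _ _).1 (hcode.hWS j I hI hj)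
    rw [hk] at this
    simpa [Finset.inf_image, Function.comp_def] using this.le
  file J hJ := by
    have hk : Setoid.ker (jointW W J) = J.inf fun i => Setoid.ker (W i) :=
      ker_restrict_eq_inf W J
    have h₁ := (condH_eq_zero_iff _ _).1 (hcode.hMW J hJ)
    have h₂ : partitionEntropy P (Setoid.ker M) = B := by
      rw [← entH_eq_partitionEntropy, hcode.hMB]
    have h₃ := partitionEntropy_anti hcode.prob_nonneg
      (inf_le_left : Setoid.ker M ⊓ Setoid.ker (jointW W J) ≤ _)
    rw [h₁, h₂, hk] at h₃
    simpa [Finset.inf_image, Function.comp_def] using h₃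

/-- every `(n,6,7)` exact-repair code with `n ≥ 8` satisfies
`6B ≤ 16α + 60β`. -/
theorem stmt_14 {Ω : Type*} [Fintype Ω] {n : ℕ} {B α β : ℝ} {P : Ω → ℝ}
    {σM : Type*} {σW : Fin n → Type*} {σS : Fin n → Fin n → Type*}
    {M : Ω → σM} {W : ∀ j, Ω → σW j} {S : ∀ i j, Ω → σS i j}
    (hn : 8 ≤ n)
    (hcode : IsRegenCode n 6 7 B α β P M W S) :
    6 * B ≤ 16 * α + 60 * β := by
  exact hcode.isRepairRank.six_mul_file_le (Fin.castLE_injective hn)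
end

section
/- Every exact-repair regenerating code with parameters (n,k,d) = (5,4,4) and secondary parameters (B,α,β) satisfies 5B ≤ 7α + 22β. -/
open Finset

namespace RegenCode

theorem ker_prod {Ω S T : Type*} (X : Ω → S) (Y : Ω → T) :
    Setoid.ker (fun ω => (X ω, Y ω)) = Setoid.ker Y ⊓ Setoid.ker X := by
  ext ω ω'
  simp [Setoid.ker_def, Setoid.inf_def, and_comm]

variable {Ω : Type*} [Fintype Ω] {P : Ω → ℝ}

open Classical in
/-- The probability of the class of `ω` in the partition `r`. -/
noncomputable def classProb (P : Ω → ℝ) (r : Setoid Ω) (ω : Ω) : ℝ :=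
  ∑ ω', if r ω ω' then P ω' else 0

/-- The entropy of a partition of the probability space. -/
noncomputable def partH (P : Ω → ℝ) (r : Setoid Ω) : ℝ :=
  -∑ ω, P ω * Real.logb 2 (classProb P r ω)

/-- `Determines P r s` says that the partition `s` is almost surely a function of `r`. -/
def Determines (P : Ω → ℝ) (r s : Setoid Ω) : Prop :=
  partH P (r ⊓ s) = partH P r

theorem entH_eq_partH {S : Type*} (P : Ω → ℝ) (X : Ω → S) :
    entH P X = partH P (Setoid.ker X) := by
  classical
  unfold entH partH
  rw [← Finset.sum_neg_distrib,
    ← Finset.sum_fiberwise_of_maps_to (s := Finset.univ) (t := Finset.univ.image X) (g := X)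
      (fun ω _ => Finset.mem_image_of_mem X (Finset.mem_univ ω))]
  refine Finset.sum_congr (by congr) fun x _ => ?_
  rw [Finset.sum_mul, ← Finset.sum_neg_distrib]
  refine Finset.sum_congr (by congr) fun ω hω => ?_
  have hx : X ω = x := by simpa using hω
  subst hx
  have hc : classProb P (Setoid.ker X) ω
      = ∑ ω' ∈ Finset.univ.filter (fun ω' => X ω' = X ω), P ω' := by
    rw [classProb, Finset.sum_filter]
    refine Finset.sum_congr rfl fun ω' _ => ?_
    simp only [Setoid.ker_def, eq_comm]
  rw [hc]

theorem determines_of_condH_eq_zero {S T : Type*} {X : Ω → S} {Y : Ω → T}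
    (h : condH P X Y = 0) : Determines P (Setoid.ker Y) (Setoid.ker X) := by
  unfold condH at h
  rw [entH_eq_partH, entH_eq_partH, ker_prod] at h
  exact sub_eq_zero.mp h

theorem classProb_mono (hP : ∀ ω, 0 ≤ P ω) {r s : Setoid Ω} (h : r ≤ s) (ω : Ω) :
    classProb P r ω ≤ classProb P s ω := by
  classical
  refine Finset.sum_le_sum fun ω' _ => ?_
  by_cases hr : r ω ω'
  · simp [hr, h hr]
  · simp only [hr, if_false]
    split_ifs
    exacts [hP _, le_rfl]

theorem le_classProb (hP : ∀ ω, 0 ≤ P ω) (r : Setoid Ω) (ω : Ω) : P ω ≤ classProb P r ω := by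
  classical
  have := Finset.single_le_sum (f := fun ω' => if r ω ω' then P ω' else 0)
    (fun ω' _ => by split_ifs; exacts [hP _, le_rfl]) (Finset.mem_univ ω)
  simpa [classProb, r.refl ω] using this

theorem classProb_nonneg (hP : ∀ ω, 0 ≤ P ω) (r : Setoid Ω) (ω : Ω) : 0 ≤ classProb P r ω :=
  (hP ω).trans (le_classProb hP r ω)

theorem classProb_congr {r : Setoid Ω} {ω ω' : Ω} (h : r ω ω') :
    classProb P r ω = classProb P r ω' := by
  classical
  refine Finset.sum_congr rfl fun z _ => ?_
  have : r ω z ↔ r ω' z := ⟨fun k => r.trans (r.symm h) k, fun k => r.trans h k⟩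
  simp [this]

theorem partH_anti (hP : ∀ ω, 0 ≤ P ω) {r s : Setoid Ω} (h : r ≤ s) :
    partH P s ≤ partH P r := by
  refine neg_le_neg (Finset.sum_le_sum fun ω _ => ?_)
  rcases (hP ω).eq_or_lt with h0 | h0
  · simp [← h0]
  · exact mul_le_mul_of_nonneg_left (Real.logb_le_logb_of_le one_lt_two
      (h0.trans_le (le_classProb hP r ω)) (classProb_mono hP h ω)) h0.le

theorem partH_top (h1 : ∑ ω, P ω = 1) : partH P ⊤ = 0 := by
  simp [partH, classProb, Setoid.top_def, h1]

/-- The total mass of the normalised weights over the points that are `r`-equivalent to `ω₁` and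
`s`-equivalent to `ω₂` is at most one. -/
theorem sum_div_classProb_inf_le_one (r s : Setoid Ω) (ω₁ ω₂ : Ω)
    [DecidablePred fun ω => r ω ω₁ ∧ s ω ω₂] :
    (∑ ω, if r ω ω₁ ∧ s ω ω₂ then P ω / classProb P (r ⊓ s) ω else 0) ≤ 1 := by
  classical
  by_cases hex : ∃ ω₀, r ω₀ ω₁ ∧ s ω₀ ω₂
  · obtain ⟨ω₀, hr, hs⟩ := hex
    have key : (∑ ω, if r ω ω₁ ∧ s ω ω₂ then P ω / classProb P (r ⊓ s) ω else 0)
        = classProb P (r ⊓ s) ω₀ / classProb P (r ⊓ s) ω₀ := by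
      conv_rhs => rw [classProb, Finset.sum_div]
      refine Finset.sum_congr rfl fun ω _ => ?_
      have hiff : (r ω ω₁ ∧ s ω ω₂) ↔ (r ⊓ s) ω₀ ω :=
        ⟨fun ⟨h, k⟩ => ⟨r.trans hr (r.symm h), s.trans hs (s.symm k)⟩,
          fun ⟨h, k⟩ => ⟨r.trans (r.symm h) hr, s.trans (s.symm k) hs⟩⟩
      by_cases hω : (r ⊓ s) ω₀ ω
      · rw [if_pos (hiff.mpr hω), if_pos hω, ← classProb_congr hω]
        rfl
      · rw [if_neg (fun h => hω (hiff.mp h)), if_neg hω, zero_div]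
    rw [key]
    exact div_self_le_one _
  · push Not at hex
    rw [Finset.sum_eq_zero fun ω _ => if_neg fun h => hex ω h.1 h.2]
    exact zero_le_one

theorem sum_classProb_ratio_le_one (hP : ∀ ω, 0 ≤ P ω) (h1 : ∑ ω, P ω = 1)
    {r s t : Setoid Ω} (hr : r ≤ t) (hs : s ≤ t) :
    ∑ ω, P ω * (classProb P r ω * classProb P s ω /
      (classProb P (r ⊓ s) ω * classProb P t ω)) ≤ 1 := by
  classical
  have expand : ∀ ω, P ω * (classProb P r ω * classProb P s ω /
      (classProb P (r ⊓ s) ω * classProb P t ω))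
      = ∑ ω₁, ∑ ω₂, (if t ω₁ ω₂ then P ω₁ * P ω₂ / classProb P t ω₁ else 0) *
        (if r ω ω₁ ∧ s ω ω₂ then P ω / classProb P (r ⊓ s) ω else 0) := by
    intro ω
    have : P ω * (classProb P r ω * classProb P s ω /
        (classProb P (r ⊓ s) ω * classProb P t ω))
        = (classProb P r ω * classProb P s ω) *
          (P ω / (classProb P (r ⊓ s) ω * classProb P t ω)) := by ring
    rw [this, classProb, classProb, Finset.sum_mul_sum, Finset.sum_mul]
    refine Finset.sum_congr rfl fun ω₁ _ => ?_
    rw [Finset.sum_mul]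
    refine Finset.sum_congr rfl fun ω₂ _ => ?_
    by_cases k₁ : r ω ω₁
    · by_cases k₂ : s ω ω₂
      · have k₃ : t ω₁ ω₂ := t.trans (t.symm (hr k₁)) (hs k₂)
        simp only [k₁, k₂, k₃, and_self, if_true]
        rw [classProb_congr (P := P) (hr k₁)]
        simp only [div_eq_mul_inv, mul_inv]
        ring
      · simp [k₂]
    · simp [k₁]
  calc _ = ∑ ω₁, ∑ ω₂, (if t ω₁ ω₂ then P ω₁ * P ω₂ / classProb P t ω₁ else 0) *
        ∑ ω, (if r ω ω₁ ∧ s ω ω₂ then P ω / classProb P (r ⊓ s) ω else 0) := by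
        simp_rw [expand, Finset.mul_sum]
        rw [Finset.sum_comm]
        exact Finset.sum_congr rfl fun ω₁ _ => Finset.sum_comm
    _ ≤ ∑ ω₁, ∑ ω₂, (if t ω₁ ω₂ then P ω₁ * P ω₂ / classProb P t ω₁ else 0) := by
        refine Finset.sum_le_sum fun ω₁ _ => Finset.sum_le_sum fun ω₂ _ => ?_
        refine mul_le_of_le_one_right ?_ (sum_div_classProb_inf_le_one r s ω₁ ω₂)
        split_ifs
        exacts [div_nonneg (mul_nonneg (hP _) (hP _)) (classProb_nonneg hP _ _), le_rfl]
    _ = ∑ ω₁, P ω₁ * (classProb P t ω₁ / classProb P t ω₁) := by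
        refine Finset.sum_congr rfl fun ω₁ _ => ?_
        conv_rhs => rw [← mul_div_assoc]
        conv_rhs => enter [1]; rw [classProb, Finset.mul_sum]
        rw [Finset.sum_div]
        refine Finset.sum_congr rfl fun ω₂ _ => ?_
        split_ifs <;> simp
    _ ≤ ∑ ω₁, P ω₁ :=
        Finset.sum_le_sum fun ω₁ _ => mul_le_of_le_one_right (hP _) (div_self_le_one _)
    _ = 1 := h1

/-- Submodularity of entropy: `t` is a function of both `r` and `s`. -/
theorem partH_submodular (hP : ∀ ω, 0 ≤ P ω) (h1 : ∑ ω, P ω = 1)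
    {r s t : Setoid Ω} (hr : r ≤ t) (hs : s ≤ t) :
    partH P (r ⊓ s) + partH P t ≤ partH P r + partH P s := by
  have hlog : 0 < Real.log 2 := Real.log_pos one_lt_two
  have pointwise : ∀ ω, P ω * (Real.log (classProb P r ω) + Real.log (classProb P s ω)
      - Real.log (classProb P (r ⊓ s) ω) - Real.log (classProb P t ω))
      ≤ P ω * (classProb P r ω * classProb P s ω /
      (classProb P (r ⊓ s) ω * classProb P t ω)) - P ω := by
    intro ω
    rcases (hP ω).eq_or_lt with h0 | h0
    · simp [← h0]
    · have pos : ∀ q : Setoid Ω, 0 < classProb P q ω := fun q =>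
        h0.trans_le (le_classProb hP q ω)
      have hle := Real.log_le_sub_one_of_pos
        (div_pos (mul_pos (pos r) (pos s)) (mul_pos (pos (r ⊓ s)) (pos t)))
      rw [Real.log_div (mul_pos (pos r) (pos s)).ne' (mul_pos (pos (r ⊓ s)) (pos t)).ne',
        Real.log_mul (pos r).ne' (pos s).ne', Real.log_mul (pos _).ne' (pos t).ne'] at hle
      have := mul_le_mul_of_nonneg_left hle h0.le
      linarith
  have total : ∑ ω, P ω * (Real.log (classProb P r ω) + Real.log (classProb P s ω)
      - Real.log (classProb P (r ⊓ s) ω) - Real.log (classProb P t ω)) ≤ 0 := by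
    refine (Finset.sum_le_sum fun ω _ => pointwise ω).trans ?_
    rw [Finset.sum_sub_distrib, h1]
    linarith [sum_classProb_ratio_le_one hP h1 hr hs]
  have identity : partH P (r ⊓ s) + partH P t - partH P r - partH P s
      = (∑ ω, P ω * (Real.log (classProb P r ω) + Real.log (classProb P s ω)
      - Real.log (classProb P (r ⊓ s) ω) - Real.log (classProb P t ω))) / Real.log 2 := by
    simp only [partH, Real.logb, Finset.sum_div, ← Finset.sum_neg_distrib]
    rw [← Finset.sum_add_distrib, ← Finset.sum_sub_distrib, ← Finset.sum_sub_distrib]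
    refine Finset.sum_congr rfl fun ω _ => ?_
    ring
  have := div_nonpos_of_nonpos_of_nonneg total hlog.le
  linarith

theorem partH_inf_le (hP : ∀ ω, 0 ≤ P ω) (h1 : ∑ ω, P ω = 1) (r s : Setoid Ω) :
    partH P (r ⊓ s) ≤ partH P r + partH P s := by
  have := partH_submodular hP h1 (le_top : r ≤ ⊤) (le_top : s ≤ ⊤)
  rwa [partH_top h1, add_zero] at this

namespace Determines

variable {r s t : Setoid Ω}

theorem of_le (h : r ≤ s) : Determines P r s := by
  rw [Determines, inf_eq_left.mpr h]

theorem partH_le (hP : ∀ ω, 0 ≤ P ω) (h : Determines P r s) : partH P s ≤ partH P r :=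
  (partH_anti hP inf_le_right).trans_eq h

theorem trans (hP : ∀ ω, 0 ≤ P ω) (h1 : ∑ ω, P ω = 1) (h : Determines P r s)
    (k : Determines P s t) : Determines P r t := by
  have sub := partH_submodular hP h1 (r := r ⊓ s) (s := s ⊓ t) (t := s) inf_le_right inf_le_left
  have mono := partH_anti hP (show r ⊓ s ⊓ (s ⊓ t) ≤ r ⊓ t from
    le_inf (inf_le_left.trans inf_le_left) (inf_le_right.trans inf_le_right))
  have mono' := partH_anti hP (inf_le_left : r ⊓ t ≤ r)
  unfold Determines at *
  linarith

theorem inf (hP : ∀ ω, 0 ≤ P ω) (h1 : ∑ ω, P ω = 1) (h : Determines P r s)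
    (k : Determines P r t) : Determines P r (s ⊓ t) := by
  have sub := partH_submodular hP h1 (r := r ⊓ s) (s := r ⊓ t) (t := r) inf_le_left inf_le_left
  have mono := partH_anti hP (inf_le_left : r ⊓ (s ⊓ t) ≤ r)
  rw [← inf_inf_distrib_left] at sub
  unfold Determines at *
  linarith

end Determines

theorem determines_ker_pi (hP : ∀ ω, 0 ≤ P ω) (h1 : ∑ ω, P ω = 1) {r : Setoid Ω} {ι : Type*}
    [Fintype ι] {σ : ι → Type*} (X : Ω → ∀ i, σ i)
    (h : ∀ i, Determines P r (Setoid.ker fun ω => X ω i)) :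
    Determines P r (Setoid.ker X) := by
  classical
  have joint : ∀ I : Finset ι, Determines P r (I.inf fun i => Setoid.ker fun ω => X ω i) := by
    intro I
    induction I using Finset.induction_on with
    | empty => exact .of_le le_top
    | insert i I _ ih =>
      rw [Finset.inf_insert]
      exact (h i).inf hP h1 ih
  refine (joint Finset.univ).trans hP h1 (.of_le fun ω ω' k => funext fun i => ?_)
  exact Finset.inf_le (f := fun i => Setoid.ker fun ω => X ω i) (Finset.mem_univ i) k

section FiveNodes

variable {B α β : ℝ} {σM : Type*} {σW : Fin 5 → Type*} {σS : Fin 5 → Fin 5 → Type*}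
  {M : Ω → σM} {W : ∀ j, Ω → σW j} {S : ∀ i j, Ω → σS i j}

theorem determines_help (hcode : IsRegenCode 5 4 4 B α β P M W S) {r : Setoid Ω} {i j : Fin 5}
    (hij : i ≠ j) (h : Determines P r (Setoid.ker (W i))) :
    Determines P r (Setoid.ker (S i j)) :=
  h.trans hcode.prob_nonneg hcode.prob_sum (determines_of_condH_eq_zero (hcode.hSW i j hij))

theorem determines_repair (hcode : IsRegenCode 5 4 4 B α β P M W S) {r : Setoid Ω} (j : Fin 5)
    (h : ∀ i, i ≠ j → Determines P r (Setoid.ker (S i j))) :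
    Determines P r (Setoid.ker (W j)) := by
  have hP := hcode.prob_nonneg
  have h1 := hcode.prob_sum
  have hcard : 4 ≤ (Finset.univ.erase j).card := by simp
  have joint : Determines P r (Setoid.ker (jointSto S (Finset.univ.erase j) j)) :=
    determines_ker_pi hP h1 _ fun i => h i (Finset.ne_of_mem_erase i.2)
  exact joint.trans hP h1
    (determines_of_condH_eq_zero (hcode.hWS j _ hcard (Finset.notMem_erase j _)))

theorem file_le_partH (hcode : IsRegenCode 5 4 4 B α β P M W S) {r : Setoid Ω} (j : Fin 5)
    (h : ∀ i, i ≠ j → Determines P r (Setoid.ker (W i))) :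
    B ≤ partH P r := by
  have hP := hcode.prob_nonneg
  have h1 := hcode.prob_sum
  have hcard : 4 ≤ (Finset.univ.erase j).card := by simp
  have joint : Determines P r (Setoid.ker (jointW W (Finset.univ.erase j))) :=
    determines_ker_pi hP h1 _ fun i => h i (Finset.ne_of_mem_erase i.2)
  rw [← hcode.hMB, entH_eq_partH]
  exact (joint.trans hP h1 (determines_of_condH_eq_zero (hcode.hMW _ hcard))).partH_le hP

theorem partH_node (hcode : IsRegenCode 5 4 4 B α β P M W S) (j : Fin 5) :
    partH P (Setoid.ker (W j)) = α := by
  rw [← entH_eq_partH, hcode.hWα]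

theorem partH_help (hcode : IsRegenCode 5 4 4 B α β P M W S) {i j : Fin 5} (hij : i ≠ j) :
    partH P (Setoid.ker (S i j)) = β := by
  rw [← entH_eq_partH, hcode.hSβ i j hij]

theorem file_le_node_add_six_help (hcode : IsRegenCode 5 4 4 B α β P M W S) :
    B ≤ α + 6 * β := by
  have hP := hcode.prob_nonneg
  have h1 := hcode.prob_sum
  have sub := partH_inf_le hP h1
  let w : Fin 5 → Setoid Ω := fun j => Setoid.ker (W j)
  let s : Fin 5 → Fin 5 → Setoid Ω := fun i j => Setoid.ker (S i j)
  have hβ : ∀ i j, i ≠ j → partH P (s i j) = β := fun i j => partH_help hcode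
  let r := w 0 ⊓ s 2 1 ⊓ s 3 1 ⊓ s 4 1 ⊓ s 3 2 ⊓ s 4 2 ⊓ s 4 3
  have d0 : Determines P r (w 0) := .of_le fun _ _ h => h.1.1.1.1.1.1
  have d1 : Determines P r (w 1) := determines_repair hcode 1 fun
    | 0, _ => determines_help hcode (by decide) d0
    | 1, h => absurd rfl h
    | 2, _ => .of_le fun _ _ h => h.1.1.1.1.1.2
    | 3, _ => .of_le fun _ _ h => h.1.1.1.1.2
    | 4, _ => .of_le fun _ _ h => h.1.1.1.2
  have d2 : Determines P r (w 2) := determines_repair hcode 2 fun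
    | 0, _ => determines_help hcode (by decide) d0
    | 1, _ => determines_help hcode (by decide) d1
    | 2, h => absurd rfl h
    | 3, _ => .of_le fun _ _ h => h.1.1.2
    | 4, _ => .of_le fun _ _ h => h.1.2
  have d3 : Determines P r (w 3) := determines_repair hcode 3 fun
    | 0, _ => determines_help hcode (by decide) d0
    | 1, _ => determines_help hcode (by decide) d1
    | 2, _ => determines_help hcode (by decide) d2
    | 3, h => absurd rfl h
    | 4, _ => .of_le fun _ _ h => h.2
  have hfile : B ≤ partH P r := file_le_partH hcode 4 fun
    | 0, _ => d0
    | 1, _ => d1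
    | 2, _ => d2
    | 3, _ => d3
    | 4, h => absurd rfl h
  linarith [sub (w 0 ⊓ s 2 1 ⊓ s 3 1 ⊓ s 4 1 ⊓ s 3 2 ⊓ s 4 2) (s 4 3),
    sub (w 0 ⊓ s 2 1 ⊓ s 3 1 ⊓ s 4 1 ⊓ s 3 2) (s 4 2),
    sub (w 0 ⊓ s 2 1 ⊓ s 3 1 ⊓ s 4 1) (s 3 2), sub (w 0 ⊓ s 2 1 ⊓ s 3 1) (s 4 1),
    sub (w 0 ⊓ s 2 1) (s 3 1), sub (w 0) (s 2 1), partH_node hcode 0,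
    hβ 2 1 (by decide), hβ 3 1 (by decide), hβ 4 1 (by decide), hβ 3 2 (by decide),
    hβ 4 2 (by decide), hβ 4 3 (by decide)]

/-- Two repairs of a pair of nodes exchange one pair of messages leaving the node `σ 3` for
another. -/
theorem two_file_add_pair_le (hcode : IsRegenCode 5 4 4 B α β P M W S)
    (σ : Equiv.Perm (Fin 5)) :
    2 * B + partH P (Setoid.ker (S (σ 3) (σ 0)) ⊓ Setoid.ker (S (σ 3) (σ 1)))
      ≤ 3 * α + 8 * β
        + partH P (Setoid.ker (S (σ 3) (σ 2)) ⊓ Setoid.ker (S (σ 3) (σ 4))) := by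
  have hP := hcode.prob_nonneg
  have h1 := hcode.prob_sum
  have sub := partH_inf_le hP h1
  let w : Fin 5 → Setoid Ω := fun j => Setoid.ker (W (σ j))
  let s : Fin 5 → Fin 5 → Setoid Ω := fun i j => Setoid.ker (S (σ i) (σ j))
  have hα : ∀ j, partH P (w j) = α := fun j => partH_node hcode (σ j)
  have hβ : ∀ i j, i ≠ j → partH P (s i j) = β :=
    fun i j hij => partH_help hcode (σ.injective.ne hij)
  have help : ∀ {r : Setoid Ω} {i j : Fin 5}, i ≠ j → Determines P r (w i) →
      Determines P r (s i j) := fun hij h => determines_help hcode (σ.injective.ne hij) h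
  have repair : ∀ {r : Setoid Ω} (j : Fin 5), (∀ i, i ≠ j → Determines P r (s i j)) →
      Determines P r (w j) := fun {r} j h => determines_repair hcode (σ j) fun i hi => by
    obtain ⟨i, rfl⟩ := σ.surjective i
    exact h i fun e => hi (congrArg σ e)
  have file : ∀ {r : Setoid Ω} (j : Fin 5), (∀ i, i ≠ j → Determines P r (w i)) →
      B ≤ partH P r := fun {r} j h => file_le_partH hcode (σ j) fun i hi => by
    obtain ⟨i, rfl⟩ := σ.surjective i
    exact h i fun e => hi (congrArg σ e)
  let x₁ := w 1 ⊓ s 2 0 ⊓ s 3 0 ⊓ s 4 0 ⊓ s 2 4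
  let x₂ := w 0 ⊓ s 2 1 ⊓ s 3 1 ⊓ s 4 1 ⊓ s 2 4
  have d₁ : Determines P x₁ (w 0) := repair 0 fun
    | 0, h => absurd rfl h
    | 1, _ => help (by decide) (.of_le fun _ _ h => h.1.1.1.1)
    | 2, _ => .of_le fun _ _ h => h.1.1.1.2
    | 3, _ => .of_le fun _ _ h => h.1.1.2
    | 4, _ => .of_le fun _ _ h => h.1.2
  have d₂ : Determines P x₂ (w 1) := repair 1 fun
    | 0, _ => help (by decide) (.of_le fun _ _ h => h.1.1.1.1)
    | 1, h => absurd rfl h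
    | 2, _ => .of_le fun _ _ h => h.1.1.1.2
    | 3, _ => .of_le fun _ _ h => h.1.1.2
    | 4, _ => .of_le fun _ _ h => h.1.2
  let t := w 0 ⊓ w 1 ⊓ s 2 4
  let y := x₁ ⊓ w 0 ⊓ (x₂ ⊓ w 1)
  have union : partH P y + partH P t ≤ partH P (x₁ ⊓ w 0) + partH P (x₂ ⊓ w 1) :=
    partH_submodular hP h1 (fun _ _ h => ⟨⟨h.2, h.1.1.1.1.1⟩, h.1.2⟩)
      (fun _ _ h => ⟨⟨h.1.1.1.1.1, h.2⟩, h.1.2⟩)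
  let u := s 3 0 ⊓ s 3 1
  let v := s 3 2 ⊓ s 3 4
  have du : Determines P (w 3) u :=
    (help (by decide) (.of_le le_rfl)).inf hP h1 (help (by decide) (.of_le le_rfl))
  have adjoin : partH P (w 3 ⊓ u ⊓ y) + partH P u ≤ partH P (w 3 ⊓ u) + partH P y :=
    partH_submodular hP h1 inf_le_right (fun _ _ h => ⟨h.1.1.1.1.2, h.2.1.1.1.2⟩)
  have f₁ : B ≤ partH P (w 3 ⊓ u ⊓ y) := by
    have e0 : Determines P (w 3 ⊓ u ⊓ y) (w 0) := .of_le fun _ _ h => h.2.1.2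
    have e1 : Determines P (w 3 ⊓ u ⊓ y) (w 1) := .of_le fun _ _ h => h.2.2.2
    have e3 : Determines P (w 3 ⊓ u ⊓ y) (w 3) := .of_le fun _ _ h => h.1.1
    exact file 2 fun
      | 0, _ => e0
      | 1, _ => e1
      | 2, h => absurd rfl h
      | 3, _ => e3
      | 4, _ => repair 4 fun
        | 0, _ => help (by decide) e0
        | 1, _ => help (by decide) e1
        | 2, _ => .of_le fun _ _ h => h.2.1.1.2
        | 3, _ => help (by decide) e3
        | 4, h => absurd rfl h
  have f₂ : B ≤ partH P (t ⊓ v) := by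
    have e0 : Determines P (t ⊓ v) (w 0) := .of_le fun _ _ h => h.1.1.1
    have e1 : Determines P (t ⊓ v) (w 1) := .of_le fun _ _ h => h.1.1.2
    have e4 : Determines P (t ⊓ v) (w 4) := repair 4 fun
      | 0, _ => help (by decide) e0
      | 1, _ => help (by decide) e1
      | 2, _ => .of_le fun _ _ h => h.1.2
      | 3, _ => .of_le fun _ _ h => h.2.2
      | 4, h => absurd rfl h
    exact file 3 fun
      | 0, _ => e0
      | 1, _ => e1
      | 2, _ => repair 2 fun
        | 0, _ => help (by decide) e0
        | 1, _ => help (by decide) e1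
        | 2, h => absurd rfl h
        | 3, _ => .of_le fun _ _ h => h.2.1
        | 4, _ => help (by decide) e4
      | 3, h => absurd rfl h
      | 4, _ => e4
  have b₁ : partH P x₁ ≤ α + 4 * β := by
    linarith [sub (w 1 ⊓ s 2 0 ⊓ s 3 0 ⊓ s 4 0) (s 2 4), sub (w 1 ⊓ s 2 0 ⊓ s 3 0) (s 4 0),
      sub (w 1 ⊓ s 2 0) (s 3 0), sub (w 1) (s 2 0), hα 1, hβ 2 0 (by decide),
      hβ 3 0 (by decide), hβ 4 0 (by decide), hβ 2 4 (by decide)]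
  have b₂ : partH P x₂ ≤ α + 4 * β := by
    linarith [sub (w 0 ⊓ s 2 1 ⊓ s 3 1 ⊓ s 4 1) (s 2 4), sub (w 0 ⊓ s 2 1 ⊓ s 3 1) (s 4 1),
      sub (w 0 ⊓ s 2 1) (s 3 1), sub (w 0) (s 2 1), hα 0, hβ 2 1 (by decide),
      hβ 3 1 (by decide), hβ 4 1 (by decide), hβ 2 4 (by decide)]
  change 2 * B + partH P u ≤ 3 * α + 8 * β + partH P v
  unfold Determines at d₁ d₂ du
  linarith [sub t v, hα 3]

theorem two_file_le (hcode : IsRegenCode 5 4 4 B α β P M W S) : 2 * B ≤ 3 * α + 8 * β := by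
  have h := two_file_add_pair_le hcode 1
  have h' := two_file_add_pair_le hcode (Equiv.swap 0 2 * Equiv.swap 1 4)
  have e0 : (Equiv.swap 0 2 * Equiv.swap 1 4 : Equiv.Perm (Fin 5)) 0 = 2 := by decide
  have e1 : (Equiv.swap 0 2 * Equiv.swap 1 4 : Equiv.Perm (Fin 5)) 1 = 4 := by decide
  have e2 : (Equiv.swap 0 2 * Equiv.swap 1 4 : Equiv.Perm (Fin 5)) 2 = 0 := by decide
  have e3 : (Equiv.swap 0 2 * Equiv.swap 1 4 : Equiv.Perm (Fin 5)) 3 = 3 := by decide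
  have e4 : (Equiv.swap 0 2 * Equiv.swap 1 4 : Equiv.Perm (Fin 5)) 4 = 1 := by decide
  simp only [Equiv.Perm.one_apply] at h
  rw [e0, e1, e2, e3, e4] at h'
  linarith

end FiveNodes

end RegenCode

/-- every `(5,4,4)` exact-repair code satisfies `5B ≤ 7α + 22β`. -/
theorem stmt_15 {Ω : Type*} [Fintype Ω] {B α β : ℝ} {P : Ω → ℝ}
    {σM : Type*} {σW : Fin 5 → Type*} {σS : Fin 5 → Fin 5 → Type*}
    {M : Ω → σM} {W : ∀ j, Ω → σW j} {S : ∀ i j, Ω → σS i j}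
    (hcode : IsRegenCode 5 4 4 B α β P M W S) :
    5 * B ≤ 7 * α + 22 * β := by
  linarith [RegenCode.two_file_le hcode, RegenCode.file_le_node_add_six_help hcode]
end

section
/- Every exact-repair regenerating code with parameters (n,k,d) = (5,4,4) and secondary parameters (B,α,β) satisfies 6B ≤ 11α + 19β. -/
open Finset

open scoped Classical in
/-- The mass of the fibre of `X` through `ω`. -/
noncomputable def fiberMass {Ω S : Type*} [Fintype Ω] (P : Ω → ℝ) (X : Ω → S) (ω : Ω) : ℝ :=
  ∑ ω' with X ω' = X ω, P ω'

section Entropy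

variable {Ω S T U V : Type*} [Fintype Ω] {P : Ω → ℝ}

lemma fiberMass_congr {X : Ω → S} {ω ω' : Ω} (h : X ω = X ω') :
    fiberMass P X ω = fiberMass P X ω' := by
  rw [fiberMass, fiberMass, h]

lemma fiberMass_mono (hP : ∀ ω, 0 ≤ P ω) {X : Ω → S} {Y : Ω → T} {ω : Ω}
    (h : ∀ ω', P ω' ≠ 0 → X ω' = X ω → Y ω' = Y ω) : fiberMass P X ω ≤ fiberMass P Y ω := by
  classical
  rw [fiberMass, fiberMass, Finset.sum_filter, Finset.sum_filter]
  refine Finset.sum_le_sum fun ω' _ => ?_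
  by_cases h0 : P ω' = 0
  · simp [h0]
  by_cases hX : X ω' = X ω
  · simp [hX, h ω' h0 hX]
  · rw [if_neg hX]
    split_ifs
    exacts [hP ω', le_rfl]

lemma le_fiberMass (hP : ∀ ω, 0 ≤ P ω) (X : Ω → S) (ω : Ω) : P ω ≤ fiberMass P X ω := by
  classical
  exact Finset.single_le_sum (f := P) (fun ω' _ => hP ω') (by simp)

lemma entH_eq_sum (P : Ω → ℝ) (X : Ω → S) :
    entH P X = ∑ ω, P ω * -Real.logb 2 (fiberMass P X ω) := by
  classical
  rw [← Finset.sum_fiberwise_of_maps_to (s := Finset.univ) (t := Finset.univ.image X) (g := X)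
    (fun ω _ => Finset.mem_image_of_mem X (Finset.mem_univ ω))]
  unfold entH
  refine Finset.sum_congr (by congr) fun s _ => ?_
  rw [← mul_neg, Finset.sum_mul]
  refine Finset.sum_congr (by congr) fun ω hω => ?_
  obtain rfl := (Finset.mem_filter.mp hω).2
  simp only [fiberMass]

lemma entH_mono (hP : ∀ ω, 0 ≤ P ω) {X : Ω → S} {Y : Ω → T}
    (h : ∀ ω ω', P ω ≠ 0 → P ω' ≠ 0 → X ω = X ω' → Y ω = Y ω') : entH P Y ≤ entH P X := by
  rw [entH_eq_sum, entH_eq_sum]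
  refine Finset.sum_le_sum fun ω _ => ?_
  rcases (hP ω).eq_or_lt with h0 | h0
  · simp [← h0]
  · have h1 : 0 < fiberMass P X ω := h0.trans_le (le_fiberMass hP X ω)
    have h2 : fiberMass P X ω ≤ fiberMass P Y ω :=
      fiberMass_mono hP fun ω' hω' => h ω' ω hω' h0.ne'
    gcongr
    norm_num

/-- If `H(Y | X) = 0` then `X` determines `Y` on the support of the distribution. -/
lemma eq_of_condH_eq_zero (hP : ∀ ω, 0 ≤ P ω) {X : Ω → S} {Y : Ω → T} (h : condH P Y X = 0)
    {ω ω' : Ω} (hω : P ω ≠ 0) (hω' : P ω' ≠ 0) (hX : X ω = X ω') : Y ω = Y ω' := by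
  have hle : ∀ ω, P ω ≠ 0 → 0 < fiberMass P (fun ω => (Y ω, X ω)) ω ∧
      fiberMass P (fun ω => (Y ω, X ω)) ω ≤ fiberMass P X ω := fun ω h0 =>
    ⟨((hP ω).lt_of_ne' h0).trans_le (le_fiberMass hP _ ω),
      fiberMass_mono hP fun ω' _ hYX => (Prod.mk.inj hYX).2⟩
  rw [condH, entH_eq_sum, entH_eq_sum, ← Finset.sum_sub_distrib,
    Finset.sum_eq_zero_iff_of_nonneg fun ω _ => ?_] at h
  · have h1 := h ω (Finset.mem_univ ω)
    rw [← mul_sub, mul_eq_zero, or_iff_right hω] at h1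
    obtain ⟨hpos, hle'⟩ := hle ω hω
    have h2 : fiberMass P X ω = fiberMass P (fun ω => (Y ω, X ω)) ω :=
      Real.logb_injOn_pos (b := 2) (by norm_num) (hpos.trans_le hle') hpos (by linarith)
    by_contra hY
    refine h2.not_gt ?_
    rw [fiberMass, fiberMass]
    refine Finset.sum_lt_sum_of_subset (i := ω') (fun ω₁ h₁ => ?_) (by simp [hX])
      (by simp [Ne.symm hY]) ((hP ω').lt_of_ne' hω') fun ω _ _ => hP ω
    simp only [Finset.mem_filter, Finset.mem_univ, true_and, Prod.mk.injEq] at h₁ ⊢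
    exact h₁.2
  · rw [← mul_sub]
    rcases eq_or_ne (P ω) 0 with h0 | h0
    · simp [h0]
    · refine mul_nonneg (hP ω) (sub_nonneg.mpr (neg_le_neg ?_))
      exact Real.logb_le_logb_of_le (by norm_num) (hle ω h0).1 (hle ω h0).2

lemma entH_nonneg (hP : ∀ ω, 0 ≤ P ω) (hP1 : ∑ ω, P ω = 1) (X : Ω → S) : 0 ≤ entH P X := by
  classical
  rw [entH_eq_sum]
  refine Finset.sum_nonneg fun ω _ => mul_nonneg (hP ω) (neg_nonneg.mpr ?_)
  refine Real.logb_nonpos (by norm_num) (Finset.sum_nonneg fun ω _ => hP ω) ?_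
  rw [← hP1]
  exact Finset.sum_le_sum_of_subset_of_nonneg (Finset.filter_subset _ _) fun ω _ _ => hP ω

lemma sum_div_fiberMass_le_one (hP : ∀ ω, 0 ≤ P ω) (X : Ω → S) (s : Finset Ω)
    (hs : ∀ ω ∈ s, ∀ ω' ∈ s, X ω = X ω') : ∑ ω ∈ s, P ω / fiberMass P X ω ≤ 1 := by
  classical
  rcases s.eq_empty_or_nonempty with rfl | ⟨ω₀, h₀⟩
  · simp
  · rw [Finset.sum_congr rfl fun ω hω => by rw [fiberMass_congr (P := P) (hs ω hω ω₀ h₀)],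
      ← Finset.sum_div]
    refine div_le_one_of_le₀ ?_ (Finset.sum_nonneg fun ω _ => hP ω)
    refine Finset.sum_le_sum_of_subset_of_nonneg (fun ω hω => ?_) fun ω _ _ => hP ω
    simpa using hs ω hω ω₀ h₀

/-- The averaged likelihood ratio behind the nonnegativity of conditional mutual information. -/
lemma sum_fiberMass_ratio_le (hP : ∀ ω, 0 ≤ P ω) {X : Ω → S} {Y : Ω → T} {Z : Ω → U}
    {D : Ω → V} (hZ : ∀ ω ω', X ω = X ω' → Y ω = Y ω' → Z ω = Z ω')
    (hX : ∀ ω ω', X ω = X ω' → D ω = D ω') (hY : ∀ ω ω', Y ω = Y ω' → D ω = D ω') :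
    ∑ ω, P ω / fiberMass P Z ω * (fiberMass P X ω * fiberMass P Y ω / fiberMass P D ω)
      ≤ ∑ ω, P ω := by
  classical
  have hm : ∀ ω, 0 ≤ fiberMass P D ω := fun ω => Finset.sum_nonneg fun ω _ => hP ω
  calc ∑ ω, P ω / fiberMass P Z ω * (fiberMass P X ω * fiberMass P Y ω / fiberMass P D ω)
      = ∑ ω, ∑ ω₁, ∑ ω₂, if X ω₁ = X ω ∧ Y ω₂ = Y ω then
          P ω₁ * P ω₂ / fiberMass P D ω₁ * (P ω / fiberMass P Z ω) else 0 := by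
        refine Finset.sum_congr rfl fun ω _ => ?_
        conv_lhs => rw [fiberMass.eq_def P X, fiberMass.eq_def P Y, Finset.sum_filter,
          Finset.sum_filter, Finset.sum_mul_sum, Finset.sum_div, Finset.mul_sum]
        refine Finset.sum_congr rfl fun ω₁ _ => ?_
        rw [Finset.sum_div, Finset.mul_sum]
        refine Finset.sum_congr rfl fun ω₂ _ => ?_
        by_cases h1 : X ω₁ = X ω <;> by_cases h2 : Y ω₂ = Y ω <;> simp only [h1, h2, and_self,
          and_true, and_false, if_true, if_false, mul_zero, zero_mul, zero_div]
        rw [fiberMass_congr (P := P) (hX _ _ h1)]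
        ring
    _ = ∑ ω₁, ∑ ω₂, ∑ ω, if X ω₁ = X ω ∧ Y ω₂ = Y ω then
          P ω₁ * P ω₂ / fiberMass P D ω₁ * (P ω / fiberMass P Z ω) else 0 := by
        rw [Finset.sum_comm]
        exact Finset.sum_congr rfl fun ω₁ _ => Finset.sum_comm
    _ ≤ ∑ ω₁, ∑ ω₂, if D ω₂ = D ω₁ then P ω₁ * P ω₂ / fiberMass P D ω₁ else 0 := by
        refine Finset.sum_le_sum fun ω₁ _ => Finset.sum_le_sum fun ω₂ _ => ?_
        have h0 : 0 ≤ P ω₁ * P ω₂ / fiberMass P D ω₁ :=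
          div_nonneg (mul_nonneg (hP _) (hP _)) (hm _)
        split_ifs with h
        · rw [← Finset.sum_filter, ← Finset.mul_sum]
          refine mul_le_of_le_one_right h0 (sum_div_fiberMass_le_one hP Z _ fun ω hω ω' hω' => ?_)
          simp only [Finset.mem_filter, Finset.mem_univ, true_and] at hω hω'
          exact hZ _ _ (hω.1.symm.trans hω'.1) (hω.2.symm.trans hω'.2)
        · refine (Finset.sum_eq_zero fun ω _ => if_neg fun hω => h ?_).le
          exact (hY _ _ hω.2).trans (hX _ _ hω.1).symm
    _ ≤ ∑ ω, P ω := by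
        refine Finset.sum_le_sum fun ω₁ _ => ?_
        rw [← Finset.sum_filter, ← Finset.sum_div, ← Finset.mul_sum]
        rw [mul_div_assoc]
        exact mul_le_of_le_one_right (hP ω₁) (div_self_le_one _)

/-- Submodularity of entropy, for `Z` determined by `(X, Y)` and `D` by each of `X` and `Y`. -/
lemma entH_submodular (hP : ∀ ω, 0 ≤ P ω) {X : Ω → S} {Y : Ω → T} {Z : Ω → U} {D : Ω → V}
    (hZ : ∀ ω ω', X ω = X ω' → Y ω = Y ω' → Z ω = Z ω')
    (hX : ∀ ω ω', X ω = X ω' → D ω = D ω') (hY : ∀ ω ω', Y ω = Y ω' → D ω = D ω') :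
    entH P Z + entH P D ≤ entH P X + entH P Y := by
  have hlog : 0 < Real.log 2 := Real.log_pos (by norm_num)
  have hpt : ∀ ω, P ω - P ω / fiberMass P Z ω *
        (fiberMass P X ω * fiberMass P Y ω / fiberMass P D ω)
      ≤ Real.log 2 * (P ω * -Real.logb 2 (fiberMass P X ω) +
        P ω * -Real.logb 2 (fiberMass P Y ω) - (P ω * -Real.logb 2 (fiberMass P Z ω) +
        P ω * -Real.logb 2 (fiberMass P D ω))) := by
    intro ω
    rcases (hP ω).eq_or_lt with h0 | h0
    · simp [← h0]
    have pX : 0 < fiberMass P X ω := h0.trans_le (le_fiberMass hP X ω)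
    have pY : 0 < fiberMass P Y ω := h0.trans_le (le_fiberMass hP Y ω)
    have pZ : 0 < fiberMass P Z ω := h0.trans_le (le_fiberMass hP Z ω)
    have pD : 0 < fiberMass P D ω := h0.trans_le (le_fiberMass hP D ω)
    have key := Real.log_le_sub_one_of_pos (div_pos (mul_pos pX pY) (mul_pos pZ pD))
    rw [Real.log_div (mul_pos pX pY).ne' (mul_pos pZ pD).ne', Real.log_mul pX.ne' pY.ne',
      Real.log_mul pZ.ne' pD.ne'] at key
    have e1 : P ω / fiberMass P Z ω * (fiberMass P X ω * fiberMass P Y ω / fiberMass P D ω) =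
        P ω * (fiberMass P X ω * fiberMass P Y ω / (fiberMass P Z ω * fiberMass P D ω)) := by
      field_simp
    have e2 : ∀ x, Real.log x = Real.log 2 * Real.logb 2 x := fun x => by
      rw [Real.logb]; field_simp
    rw [e1]
    simp only [e2 (fiberMass _ _ _)] at key
    nlinarith [mul_le_mul_of_nonneg_left key h0.le]
  have hsum := Finset.sum_le_sum fun ω (_ : ω ∈ Finset.univ) => hpt ω
  rw [Finset.sum_sub_distrib, ← Finset.mul_sum, Finset.sum_sub_distrib, Finset.sum_add_distrib,
    Finset.sum_add_distrib, ← entH_eq_sum, ← entH_eq_sum, ← entH_eq_sum, ← entH_eq_sum] at hsum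
  have h0 := (sub_nonneg.mpr (sum_fiberMass_ratio_le hP hZ hX hY)).trans hsum
  linarith [nonneg_of_mul_nonneg_right h0 hlog]

end Entropy

section RepairPatterns

variable {n : ℕ}

/-- If all data of node `i`, or all helper data for the repair of node `i`, is in the pattern `E`,
then all data of node `i` is added. Here `E i i` stands for the data stored at node `i` and
`E i j` with `i ≠ j` for the helper data sent from `i` to `j`. -/
def repairStep (E : Fin n → Fin n → Bool) : Fin n → Fin n → Bool :=
  fun i j => E i j || E i i || decide (∀ k, k ≠ i → E k i)

/-- The pattern formed by all data of the nodes in `L` and the helper data listed in `T`. -/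
def pattern (L : List (Fin n)) (T : List (Fin n × Fin n)) : Fin n → Fin n → Bool :=
  fun i j => L.contains i || T.contains (i, j)

/-- The properties of the joint entropy of a pattern of data in a repairable system that is
symmetric under permutations of the nodes. -/
structure IsRepairEntropy (g : (Fin n → Fin n → Bool) → ℝ) : Prop where
  nonneg : ∀ E, 0 ≤ g E
  mono : ∀ {E F}, (∀ i j, E i j → F i j) → g E ≤ g F
  submodular : ∀ E F, g (fun i j => E i j || F i j) + g (fun i j => E i j && F i j) ≤ g E + g F
  repairStep_le : ∀ E, g (repairStep E) ≤ g E
  comp_perm : ∀ (σ : Equiv.Perm (Fin n)) (E), g (fun i j => E (σ i) (σ j)) = g E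

namespace IsRepairEntropy

variable {g : (Fin n → Fin n → Bool) → ℝ}

lemma exchange (hg : IsRepairEntropy g) {X Y Z I : Fin n → Fin n → Bool}
    (hZ : ∀ i j, Z i j → (repairStep^[3] fun i j => X i j || Y i j) i j)
    (hI : ∀ i j, I i j → X i j && Y i j) : g Z + g I ≤ g X + g Y := by
  have h1 := hg.mono hZ
  simp only [Function.iterate_succ, Function.iterate_zero, Function.comp_apply, id] at h1
  have h2 := hg.repairStep_le fun i j => X i j || Y i j
  have h3 := hg.repairStep_le (repairStep fun i j => X i j || Y i j)
  have h4 := hg.repairStep_le (repairStep (repairStep fun i j => X i j || Y i j))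
  linarith [hg.submodular X Y, hg.mono hI]

lemma relabel (hg : IsRepairEntropy g) {E F : Fin n → Fin n → Bool} (p : Fin n → Fin n)
    (hp : Function.Injective p) (h : ∀ i j, E (p i) (p j) = F i j) : g E = g F := by
  rw [← hg.comp_perm (Equiv.ofBijective p (Finite.injective_iff_bijective.mp hp)) E]
  exact congrArg g (funext fun i => funext fun j => h i j)

end IsRepairEntropy

/-- The entropy of all data is bounded by the entropies of one stored and one helper datum. -/
lemma IsRepairEntropy.six_mul_le {g : (Fin 5 → Fin 5 → Bool) → ℝ} (hg : IsRepairEntropy g) :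
    6 * g (pattern [0, 1, 2, 3, 4] []) ≤
      11 * g (pattern [0] []) + 19 * g (pattern [] [(1, 2)]) := by
  have r1 : g (pattern [0] [(1, 2)]) + g (pattern [] []) ≤
      g (pattern [0] []) + g (pattern [] [(1, 2)]) :=
    hg.exchange (by decide +kernel) (by decide +kernel)
  have r2 : g (pattern [0] [(1, 2), (1, 3), (2, 0), (4, 0)]) + g (pattern [0] [(2, 0)]) ≤
      g (pattern [0] [(1, 2), (1, 3), (2, 0)]) + g (pattern [0] [(2, 0), (4, 0)]) :=
    hg.exchange (by decide +kernel) (by decide +kernel)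
  have r3 : g (pattern [0, 1, 2] [(3, 0), (4, 0)]) + g (pattern [1] [(2, 0), (2, 3), (4, 0)]) ≤
      g (pattern [0, 1] [(2, 0), (2, 3), (3, 0), (4, 0)]) + g (pattern [1, 2] [(4, 0)]) :=
    hg.exchange (by decide +kernel) (by decide +kernel)
  have r4 : g (pattern [0] [(1, 2), (1, 3)]) + g (pattern [] []) ≤
      g (pattern [0] [(1, 2)]) + g (pattern [] [(1, 3)]) :=
    hg.exchange (by decide +kernel) (by decide +kernel)
  have r5 : g (pattern [0, 3] [(1, 3), (1, 4), (2, 3), (4, 3)]) + g (pattern [] []) ≤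
      g (pattern [0] [(1, 3), (1, 4), (2, 3)]) + g (pattern [] [(4, 3)]) :=
    hg.exchange (by decide +kernel) (by decide +kernel)
  have r6 : g (pattern [0, 1, 2, 3, 4] []) + g (pattern [] [(2, 0)]) ≤
      g (pattern [0] [(1, 3), (1, 4), (2, 0)]) + g (pattern [2] [(3, 4)]) :=
    hg.exchange (by decide +kernel) (by decide +kernel)
  have r7 : g (pattern [0, 1, 3] [(2, 0), (2, 1), (4, 1)]) +
      g (pattern [0] [(1, 2), (1, 4), (3, 0)]) ≤
      g (pattern [0] [(1, 2), (1, 4), (2, 0), (3, 0)]) + g (pattern [0, 1, 3] [(2, 1), (4, 1)]) :=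
    hg.exchange (by decide +kernel) (by decide +kernel)
  have r8 : g (pattern [0, 1, 2, 3, 4] []) + g (pattern [0, 1] [(2, 0), (3, 0), (4, 0)]) ≤
      g (pattern [0, 1] [(2, 0), (2, 3), (3, 0), (4, 0)]) +
        g (pattern [0, 1, 4] [(2, 0), (3, 0)]) :=
    hg.exchange (by decide +kernel) (by decide +kernel)
  have r9 : g (pattern [0, 1, 2, 3, 4] []) + g (pattern [2] [(0, 2), (1, 2), (3, 0), (3, 1)]) ≤
      g (pattern [0, 1, 2] [(3, 0), (3, 1), (4, 0)]) +
        g (pattern [2, 3] [(0, 2), (1, 2), (4, 2)]) :=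
    hg.exchange (by decide +kernel) (by decide +kernel)
  have r10 : g (pattern [0, 1, 2] [(3, 0), (3, 1), (4, 1)]) +
      g (pattern [0] [(1, 2), (1, 3), (2, 0)]) ≤
      g (pattern [0] [(1, 2), (1, 3), (2, 0), (3, 0)]) + g (pattern [0, 1, 2] [(3, 1), (4, 1)]) :=
    hg.exchange (by decide +kernel) (by decide +kernel)
  have r11 : g (pattern [0, 2, 3] [(1, 2), (4, 2)]) + g (pattern [] []) ≤
      g (pattern [0] [(1, 2)]) + g (pattern [3] [(4, 2)]) :=
    hg.exchange (by decide +kernel) (by decide +kernel)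
  have r12 : g (pattern [0, 1, 2, 3, 4] []) + g (pattern [0] [(2, 0), (3, 0)]) ≤
      g (pattern [0, 1] [(2, 0), (2, 3), (3, 0), (4, 0)]) +
        g (pattern [0] [(2, 0), (3, 0), (4, 2), (4, 3)]) :=
    hg.exchange (by decide +kernel) (by decide +kernel)
  have r13 : g (pattern [0, 3] [(1, 2)]) + g (pattern [] [(0, 3)]) ≤
      g (pattern [0] [(1, 2)]) + g (pattern [3] [(0, 3)]) :=
    hg.exchange (by decide +kernel) (by decide +kernel)
  have r14 : g (pattern [0] [(1, 2), (1, 3), (4, 2)]) + g (pattern [] []) ≤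
      g (pattern [0] [(1, 2), (1, 3)]) + g (pattern [] [(4, 2)]) :=
    hg.exchange (by decide +kernel) (by decide +kernel)
  have e1 : g (pattern [] [(1, 3)]) = g (pattern [] [(1, 2)]) :=
    hg.relabel ![0, 1, 3, 2, 4] (by decide) (by decide +kernel)
  have e2 : g (pattern [0] [(1, 3), (1, 4), (2, 3)]) = g (pattern [1] [(2, 0), (2, 3), (4, 0)]) :=
    hg.relabel ![3, 0, 1, 4, 2] (by decide) (by decide +kernel)
  have e3 : g (pattern [] [(4, 3)]) = g (pattern [] [(1, 2)]) :=
    hg.relabel ![0, 4, 3, 1, 2] (by decide) (by decide +kernel)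
  have e4 : g (pattern [0, 3] [(1, 3), (1, 4), (2, 3), (4, 3)]) =
      g (pattern [0, 1] [(2, 0), (2, 3), (3, 0), (4, 0)]) :=
    hg.relabel ![3, 0, 1, 4, 2] (by decide) (by decide +kernel)
  have e5 : g (pattern [2] [(3, 4)]) = g (pattern [0] [(1, 2)]) :=
    hg.relabel ![2, 3, 4, 0, 1] (by decide) (by decide +kernel)
  have e6 : g (pattern [] [(2, 0)]) = g (pattern [] [(1, 2)]) :=
    hg.relabel ![1, 2, 0, 3, 4] (by decide) (by decide +kernel)
  have e7 : g (pattern [0] [(1, 2), (1, 4), (2, 0), (3, 0)]) =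
      g (pattern [0] [(1, 2), (1, 3), (2, 0), (4, 0)]) :=
    hg.relabel ![0, 1, 2, 4, 3] (by decide) (by decide +kernel)
  have e8 : g (pattern [0, 1, 3] [(2, 1), (4, 1)]) = g (pattern [0, 1, 2] [(3, 0), (4, 0)]) :=
    hg.relabel ![1, 0, 3, 2, 4] (by decide) (by decide +kernel)
  have e9 : g (pattern [0] [(1, 2), (1, 4), (3, 0)]) = g (pattern [0] [(1, 3), (1, 4), (2, 0)]) :=
    hg.relabel ![0, 1, 3, 2, 4] (by decide) (by decide +kernel)
  have e10 : g (pattern [0, 1, 4] [(2, 0), (3, 0)]) = g (pattern [0, 1, 2] [(3, 0), (4, 0)]) :=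
    hg.relabel ![0, 1, 4, 2, 3] (by decide) (by decide +kernel)
  have e11 : g (pattern [0, 1, 2] [(3, 0), (3, 1), (4, 0)]) =
      g (pattern [0, 1, 3] [(2, 0), (2, 1), (4, 1)]) :=
    hg.relabel ![1, 0, 3, 2, 4] (by decide) (by decide +kernel)
  have e12 : g (pattern [2, 3] [(0, 2), (1, 2), (4, 2)]) =
      g (pattern [0, 1] [(2, 0), (3, 0), (4, 0)]) :=
    hg.relabel ![2, 3, 0, 1, 4] (by decide) (by decide +kernel)
  have e13 : g (pattern [0] [(1, 2), (1, 3), (2, 0), (3, 0)]) =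
      g (pattern [2] [(0, 2), (1, 2), (3, 0), (3, 1)]) :=
    hg.relabel ![2, 3, 0, 1, 4] (by decide) (by decide +kernel)
  have e14 : g (pattern [0, 1, 2] [(3, 1), (4, 1)]) = g (pattern [0, 1, 2] [(3, 0), (4, 0)]) :=
    hg.relabel ![1, 0, 2, 3, 4] (by decide) (by decide +kernel)
  have e15 : g (pattern [0, 1, 2] [(3, 0), (3, 1), (4, 1)]) =
      g (pattern [0, 1, 3] [(2, 0), (2, 1), (4, 1)]) :=
    hg.relabel ![0, 1, 3, 2, 4] (by decide) (by decide +kernel)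
  have e16 : g (pattern [3] [(4, 2)]) = g (pattern [0] [(1, 2)]) :=
    hg.relabel ![3, 4, 2, 0, 1] (by decide) (by decide +kernel)
  have e17 : g (pattern [0, 2, 3] [(1, 2), (4, 2)]) = g (pattern [0, 1, 2] [(3, 0), (4, 0)]) :=
    hg.relabel ![2, 0, 3, 1, 4] (by decide) (by decide +kernel)
  have e18 : g (pattern [0] [(2, 0), (3, 0), (4, 2), (4, 3)]) =
      g (pattern [2] [(0, 2), (1, 2), (3, 0), (3, 1)]) :=
    hg.relabel ![2, 3, 0, 4, 1] (by decide) (by decide +kernel)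
  have e19 : g (pattern [0] [(2, 0), (3, 0)]) = g (pattern [0] [(2, 0), (4, 0)]) :=
    hg.relabel ![0, 1, 2, 4, 3] (by decide) (by decide +kernel)
  have e20 : g (pattern [3] [(0, 3)]) = g (pattern [0] [(2, 0)]) :=
    hg.relabel ![3, 1, 0, 2, 4] (by decide) (by decide +kernel)
  have e21 : g (pattern [0, 3] [(1, 2)]) = g (pattern [1, 2] [(4, 0)]) :=
    hg.relabel ![2, 0, 3, 4, 1] (by decide) (by decide +kernel)
  have e22 : g (pattern [] [(0, 3)]) = g (pattern [] [(1, 2)]) :=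
    hg.relabel ![1, 0, 3, 2, 4] (by decide) (by decide +kernel)
  have e23 : g (pattern [] [(4, 2)]) = g (pattern [] [(1, 2)]) :=
    hg.relabel ![0, 4, 2, 1, 3] (by decide) (by decide +kernel)
  have e24 : g (pattern [0] [(1, 2), (1, 3), (4, 2)]) = g (pattern [1] [(2, 0), (2, 3), (4, 0)]) :=
    hg.relabel ![2, 0, 1, 3, 4] (by decide) (by decide +kernel)
  linarith [r1, r2, r3, r4, r5, r6, r7, r8, r9, r10, r11, r12, r13, r14, hg.nonneg (pattern [] [])]

end RepairPatterns

section RegenCode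

variable {Ω : Type*} {n : ℕ} {σW : Fin n → Type*} {σS : Fin n → Fin n → Type*}

/-- The joint random variable formed by the data in the pattern `E`. -/
def patternData (W : ∀ j, Ω → σW j) (S : ∀ i j, Ω → σS i j) (E : Fin n → Fin n → Bool) (ω : Ω) :
    ∀ i j, Option (σW i ⊕ σS i j) :=
  fun i j => if E i j then some (if i = j then .inl (W i ω) else .inr (S i j ω)) else none

lemma patternData_eq_iff {W : ∀ j, Ω → σW j} {S : ∀ i j, Ω → σS i j} {E : Fin n → Fin n → Bool}
    {ω ω' : Ω} : patternData W S E ω = patternData W S E ω' ↔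
      ∀ i j, E i j → (i = j → W i ω = W i ω') ∧ (i ≠ j → S i j ω = S i j ω') := by
  simp only [funext_iff, patternData]
  refine forall₂_congr fun i j => ?_
  rcases eq_or_ne i j with rfl | hij
  · by_cases hE : E i i <;> simp [hE]
  · by_cases hE : E i j <;> simp [hE, hij]

variable [Fintype Ω] {k d : ℕ} {B α β : ℝ} {P : Ω → ℝ} {σM : Type*} {M : Ω → σM}
  {W : ∀ j, Ω → σW j} {S : ∀ i j, Ω → σS i j}

namespace IsRegenCode

lemma entH_patternData_repairStep_le (hcode : IsRegenCode n k d B α β P M W S)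
    (hd : d + 1 = n) (E : Fin n → Fin n → Bool) :
    entH P (patternData W S (repairStep E)) ≤ entH P (patternData W S E) := by
  refine entH_mono hcode.prob_nonneg fun ω ω' hω hω' h => ?_
  rw [patternData_eq_iff] at h ⊢
  have hnode : ∀ i j, W i ω = W i ω' →
      (i = j → W i ω = W i ω') ∧ (i ≠ j → S i j ω = S i j ω') := fun i j hi =>
    ⟨fun _ => hi, fun hij =>
      eq_of_condH_eq_zero hcode.prob_nonneg (hcode.hSW i j hij) hω hω' hi⟩
  intro i j hE
  simp only [repairStep, Bool.or_eq_true, decide_eq_true_eq] at hE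
  rcases hE with (hE | hE) | hE
  · exact h i j hE
  · exact hnode i j ((h i i hE).1 rfl)
  · refine hnode i j (eq_of_condH_eq_zero hcode.prob_nonneg
      (hcode.hWS i (Finset.univ.erase i) ?_ (Finset.notMem_erase i _)) hω hω' ?_)
    · rw [Finset.card_erase_of_mem (Finset.mem_univ i), Finset.card_univ, Fintype.card_fin]
      omega
    · funext l
      have hl := Finset.ne_of_mem_erase l.2
      exact (h l i (hE l hl)).2 hl

lemma isRepairEntropy (hcode : IsRegenCode n k d B α β P M W S) (hd : d + 1 = n) :
    IsRepairEntropy fun E : Fin n → Fin n → Bool =>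
      ∑ σ : Equiv.Perm (Fin n), entH P (patternData W S fun i j => E (σ i) (σ j)) where
  nonneg E := Finset.sum_nonneg fun σ _ => entH_nonneg hcode.prob_nonneg hcode.prob_sum _
  mono hEF := Finset.sum_le_sum fun σ _ => entH_mono hcode.prob_nonneg fun ω ω' _ _ h => by
    rw [patternData_eq_iff] at h ⊢
    exact fun i j hE => h i j (hEF _ _ hE)
  submodular E F := by
    rw [← Finset.sum_add_distrib, ← Finset.sum_add_distrib]
    refine Finset.sum_le_sum fun σ _ => entH_submodular hcode.prob_nonneg ?_ ?_ ?_ <;>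
      simp only [patternData_eq_iff, Bool.or_eq_true, Bool.and_eq_true]
    · rintro ω ω' hE hF i j (h | h)
      exacts [hE i j h, hF i j h]
    · exact fun ω ω' hE i j h => hE i j h.1
    · exact fun ω ω' hF i j h => hF i j h.2
  repairStep_le E := by
    refine Finset.sum_le_sum fun σ _ => ?_
    have hcomm : (fun i j => repairStep E (σ i) (σ j)) =
        repairStep fun i j => E (σ i) (σ j) := by
      funext i j
      simp only [repairStep]
      congr 2
      rw [← σ.forall_congr_right]
      simp only [ne_eq, EmbeddingLike.apply_eq_iff_eq]
    rw [hcomm]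
    exact hcode.entH_patternData_repairStep_le hd _
  comp_perm τ E := Equiv.sum_comp (Equiv.mulLeft τ)
    fun σ => entH P (patternData W S fun i j => E (σ i) (σ j))

lemma le_entH_patternData (hcode : IsRegenCode n k d B α β P M W S)
    {E : Fin n → Fin n → Bool} (hE : ∀ i, E i i) :
    B ≤ entH P (patternData W S E) := by
  rw [← hcode.hMB]
  refine entH_mono hcode.prob_nonneg fun ω ω' hω hω' h => ?_
  rw [patternData_eq_iff] at h
  refine eq_of_condH_eq_zero hcode.prob_nonneg (hcode.hMW Finset.univ ?_) hω hω' ?_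
  · have := hcode.hkd
    have := hcode.hdn
    rw [Finset.card_univ, Fintype.card_fin]
    omega
  · funext i
    exact (h i i (hE i)).1 rfl

lemma entH_patternData_node_le (hcode : IsRegenCode n k d B α β P M W S)
    {E : Fin n → Fin n → Bool} (l : Fin n)
    (hE : ∀ i j, E i j → i = l) : entH P (patternData W S E) ≤ α := by
  rw [← hcode.hWα l]
  refine entH_mono hcode.prob_nonneg fun ω ω' hω hω' h => ?_
  rw [patternData_eq_iff]
  intro i j hij
  obtain rfl := hE i j hij
  exact ⟨fun _ => h, fun hne =>
    eq_of_condH_eq_zero hcode.prob_nonneg (hcode.hSW i j hne) hω hω' h⟩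

lemma entH_patternData_helper_le (hcode : IsRegenCode n k d B α β P M W S)
    {E : Fin n → Fin n → Bool} {l m : Fin n} (hlm : l ≠ m)
    (hE : ∀ i j, E i j → i = l ∧ j = m) : entH P (patternData W S E) ≤ β := by
  rw [← hcode.hSβ l m hlm]
  refine entH_mono hcode.prob_nonneg fun ω ω' hω hω' h => ?_
  rw [patternData_eq_iff]
  intro i j hij
  obtain ⟨rfl, rfl⟩ := hE i j hij
  exact ⟨fun heq => absurd heq hlm, fun _ => h⟩

end IsRegenCode

end RegenCode

/-- every `(5,4,4)` exact-repair code satisfies `6B ≤ 11α + 19β`. -/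
theorem stmt_17 {Ω : Type*} [Fintype Ω] {B α β : ℝ} {P : Ω → ℝ}
    {σM : Type*} {σW : Fin 5 → Type*} {σS : Fin 5 → Fin 5 → Type*}
    {M : Ω → σM} {W : ∀ j, Ω → σW j} {S : ∀ i j, Ω → σS i j}
    (hcode : IsRegenCode 5 4 4 B α β P M W S) :
    6 * B ≤ 11 * α + 19 * β := by
  have hmain := (hcode.isRepairEntropy rfl).six_mul_le
  have hB := Finset.card_nsmul_le_sum (Finset.univ : Finset (Equiv.Perm (Fin 5))) _ B fun σ _ =>
    hcode.le_entH_patternData (E := fun i j => pattern [0, 1, 2, 3, 4] [] (σ i) (σ j)) fun i => by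
      generalize σ i = l
      revert l
      decide
  have hα := Finset.sum_le_card_nsmul (Finset.univ : Finset (Equiv.Perm (Fin 5))) _ α fun σ _ =>
    hcode.entH_patternData_node_le (E := fun i j => pattern [0] [] (σ i) (σ j)) (σ.symm 0)
      fun i j h => by simpa [pattern, Equiv.eq_symm_apply] using h
  have hβ := Finset.sum_le_card_nsmul (Finset.univ : Finset (Equiv.Perm (Fin 5))) _ β fun σ _ =>
    hcode.entH_patternData_helper_le (E := fun i j => pattern [] [(1, 2)] (σ i) (σ j))
      (l := σ.symm 1) (m := σ.symm 2) (σ.symm.injective.ne (by decide))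
      fun i j h => by simpa [pattern, Equiv.eq_symm_apply] using h
  rw [Finset.card_univ, Fintype.card_perm, Fintype.card_fin, nsmul_eq_mul] at hB hα hβ
  norm_num [Nat.factorial] at hB hα hβ
  linarith
end
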